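/- arXiv:math/0310060 — 8 statements merged into one kernel-verified Lean document; each statement's English description precedes it below -/
import Mathlib

section
/- Let K be a field of characteristic 0 and let p, q ∈ K[x, y] be polynomials in two variables. If p and q are stably equivalent, i.e., there exist an integer m > 2 and a K-algebra automorphism φ of the polynomial ring K[x₁, …, xₘ] such that φ maps the image of p under the natural inclusion K[x, y] → K[x₁, …, xₘ] (x ↦ x₁, y ↦ x₂) to the image of q, then p and q are equivalent, i.e., there exists a K-algebra automorphism α of K[x, y] with α(p) = q. -/
open MvPolynomial


namespace StabEq

/-- kernel of a derivation is algebraically closed -/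
theorem ker_alg {L R : Type*} [Field L] [CommRing R] [IsDomain R] [CharZero R] [Algebra L R]
    (D : Derivation L R R) (S : Subalgebra L R) (hS : ∀ s ∈ S, D s = 0) (a : R)
    (ha : IsAlgebraic S a) : D a = 0 := by
  let D' : Derivation S R R := Derivation.mk'
    { toFun := D, map_add' := D.map_add
      map_smul' := fun s r => by
        simp only [Algebra.smul_def, RingHom.id_apply]
        rw [D.leibniz]
        have : D (algebraMap S R s) = 0 := hS _ s.2
        rw [this]; simp } (fun a b => D.leibniz a b)
  have hD' : ∀ x, D' x = D x := fun x => rfl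
  by_contra hne
  have key : ∀ n : ℕ, ∀ F : Polynomial S, F.natDegree ≤ n → F ≠ 0 → Polynomial.aeval a F ≠ 0 := by
    intro n
    induction n with
    | zero =>
      intro F hF h0 h1
      rw [Polynomial.eq_C_of_natDegree_le_zero hF] at h0 h1
      simp at h0 h1
      exact h0 h1
    | succ n ih =>
      intro F hF h0 h1
      by_cases hd : F.natDegree = 0
      · exact ih F (by omega) h0 h1
      have h2 := D'.map_aeval F a
      rw [h1, map_zero, hD', smul_eq_mul] at h2
      have h3 : Polynomial.aeval a F.derivative = 0 := by
        rcases mul_eq_zero.mp h2.symm with h | h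
        · exact h
        · exact absurd h hne
      refine ih F.derivative ?_ ?_ h3
      · have := Polynomial.natDegree_derivative_lt hd
        omega
      · intro h
        exact hd (Polynomial.derivative_eq_zero.mp h)
  obtain ⟨F, h0, h1⟩ := ha
  exact key _ F le_rfl h0 h1

/-- two elements killed by a nonzero derivation are algebraically dependent -/
theorem dep {L : Type*} [Field L] [CharZero L]
    (D : Derivation L (MvPolynomial (Fin 2) L) (MvPolynomial (Fin 2) L)) (hD : D ≠ 0)
    (v c : MvPolynomial (Fin 2) L) (hv : D v = 0) (hc : D c = 0) :
    ¬ AlgebraicIndependent L (fun o : Option Unit => o.elim v (fun _ => c)) := by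
  intro h
  have hb := h.isTranscendenceBasis_of_lift_trdeg_le_of_finite (by
    rw [MvPolynomial.trdeg_of_isDomain]; simp)
  have halg := hb.isAlgebraic
  apply hD
  ext i
  refine congrArg _ (ker_alg D _ ?_ _ (halg.isAlgebraic (X i)))
  intro s hs
  refine Derivation.eqOn_adjoin (D2 := 0) ?_ hs
  rintro _ ⟨o, rfl⟩
  rcases o with _ | o <;> simp [hv, hc]

theorem dep3 {L : Type*} [Field L] (v a b : MvPolynomial (Fin 2) L) :
    ¬ AlgebraicIndependent L (fun o : Option (Option Unit) => o.elim v
      (fun o : Option Unit => o.elim a (fun _ => b))) := by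
  intro h
  have := h.lift_cardinalMk_le_trdeg
  rw [MvPolynomial.trdeg_of_isDomain] at this
  simp at this
  norm_num at this

/-- reduction of algebraic dependence modulo `v - λ` -/
theorem red {L A σ : Type*} [Field L] [CommRing A] [IsDomain A] [Algebra L A] [Finite σ]
    (v : A) (l : L) (a : σ → A) (hv : v - algebraMap L A l ≠ 0)
    (h : ¬ AlgebraicIndependent L (fun o : Option σ => o.elim v a)) :
    ¬ AlgebraicIndependent L
      (fun i => Ideal.Quotient.mk (Ideal.span {v - algebraMap L A l}) (a i)) := by
  rw [algebraicIndependent_iff] at h ⊢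
  push Not at h ⊢
  obtain ⟨F, hF, hF0⟩ := h
  let G := optionEquivRight L σ F
  have hG0 : G ≠ 0 := fun h => hF0 ((optionEquivRight L σ).injective (h.trans (map_zero _).symm))
  let ev : MvPolynomial σ (Polynomial L) →ₐ[L] A :=
    { eval₂Hom (Polynomial.aeval v : Polynomial L →ₐ[L] A).toRingHom a with
      commutes' := fun r => by
        simp [MvPolynomial.algebraMap_apply] }
  have evC : ∀ f, ev (C f) = Polynomial.aeval v f := fun f => by
    change eval₂Hom _ a (C f) = _
    simp
  have evX : ∀ i, ev (X i) = a i := fun f => by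
    change eval₂Hom _ a (X f) = _
    simp
  have hev : ev G = 0 := by
    have : ev.comp (optionEquivRight L σ).toAlgHom = aeval (fun o : Option σ => o.elim v a) := by
      apply MvPolynomial.algHom_ext
      rintro (_ | i)
      · simp [evC]
      · simp [evX]
    rw [← hF, ← this]; rfl
  have hp : Prime (C (σ := σ) (Polynomial.X - Polynomial.C l)) :=
    (MvPolynomial.prime_C_iff _).mpr (Polynomial.prime_X_sub_C l)
  obtain ⟨G1, hG, hnd⟩ := (FiniteMultiplicity.of_prime_left hp hG0).exists_eq_pow_mul_and_not_dvd
  have hev1 : ev G1 = 0 := by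
    rw [hG, map_mul, map_pow, evC] at hev
    rcases mul_eq_zero.mp hev with h | h
    · exfalso; apply hv; simpa using eq_zero_of_pow_eq_zero h
    · exact h
  refine ⟨map (Polynomial.evalRingHom l) G1, ?_, ?_⟩
  · have : ∀ H : MvPolynomial σ (Polynomial L),
        aeval (fun i => Ideal.Quotient.mk (Ideal.span {v - algebraMap L A l}) (a i))
        (map (Polynomial.evalRingHom l) H) = Ideal.Quotient.mk _ (ev H) := by
      intro H
      induction H using MvPolynomial.induction_on with
      | C f =>
        rw [evC, map_C, aeval_C]
        induction f using Polynomial.induction_on' with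
        | add f g hf hg => simp only [map_add, hf, hg]
        | monomial n c =>
          have h1 : Ideal.Quotient.mk (Ideal.span {v - algebraMap L A l}) v
            = algebraMap L _ l := by
            rw [IsScalarTower.algebraMap_apply L A (A ⧸ _), Ideal.Quotient.algebraMap_eq,
              Ideal.Quotient.eq]
            exact Ideal.subset_span rfl
          rw [Polynomial.aeval_monomial, map_mul, map_pow, h1]
          simp [Polynomial.eval_monomial]
      | add f g hf hg => simp only [map_add, hf, hg]
      | mul_X f i hf => simp only [map_mul, hf, evX, map_X, aeval_X]
    rw [this, hev1, map_zero]
  · intro h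
    apply hnd
    rw [C_dvd_iff_map_hom_eq_zero (Polynomial.evalRingHom l)]
    · exact h
    · intro f
      rw [Polynomial.dvd_iff_isRoot]; rfl

theorem alg_const {L R : Type*} [Field L] [IsAlgClosed L] [CommRing R] [IsDomain R] [Algebra L R]
    (a : R) (ha : IsAlgebraic L a) : ∃ l : L, a = algebraMap L R l := by
  have hi := ha.isIntegral
  have hd := IsAlgClosed.degree_eq_one_of_irreducible L (minpoly.irreducible hi)
  obtain ⟨x, hx⟩ := minpoly.mem_range_of_degree_eq_one L a hd
  exact ⟨x, hx.symm⟩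

/-- locally nilpotent -/
def LN {L A : Type*} [CommRing L] [CommRing A] [Algebra L A] (D : Derivation L A A) : Prop :=
  ∀ a, ∃ n : ℕ, (D^[n]) a = 0

theorem iter_mul {L A : Type*} [CommRing L] [CommRing A] [Algebra L A]
    (D : Derivation L A A) : ∀ N m n : ℕ, m + n = N → ∀ a b : A,
    (D^[m+1]) a = 0 → (D^[n+1]) b = 0 →
    ∃ k : ℕ, 0 < k ∧ (D^[m+n]) (a * b) = k * ((D^[m]) a * (D^[n]) b) := by
  have hadd : ∀ n : ℕ, ∀ x y, (D^[n]) (x + y) = (D^[n]) x + (D^[n]) y := fun n x y =>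
    iterate_map_add D n x y
  have hsm : ∀ n : ℕ, ∀ x y, D x = 0 → (D^[n]) (x * y) = x * (D^[n]) y := by
    intro n
    induction n with
    | zero => intros; rfl
    | succ n ih =>
      intro x y hx
      rw [Function.iterate_succ_apply, Function.iterate_succ_apply, D.leibniz, hx]
      simp [ih x _ hx]
  intro N
  induction N with
  | zero =>
    intro m n h a b _ _
    obtain ⟨rfl, rfl⟩ : m = 0 ∧ n = 0 := by omega
    exact ⟨1, one_pos, by simp⟩
  | succ N ih =>
    intro m n h a b ha hb
    rcases m with _ | m
    · refine ⟨1, one_pos, ?_⟩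
      simp only [zero_add] at *
      rw [hsm _ _ _ (by simpa using ha)]; simp
    rcases n with _ | n
    · refine ⟨1, one_pos, ?_⟩
      simp only [add_zero, zero_add] at *
      rw [mul_comm, hsm _ _ _ (by simpa using hb)]; simp [mul_comm]
    obtain ⟨k1, hk1, e1⟩ := ih m (n+1) (by omega) (D a) b (by simpa using ha) hb
    obtain ⟨k2, hk2, e2⟩ := ih (m+1) n (by omega) a (D b) ha (by simpa using hb)
    refine ⟨k1 + k2, by omega, ?_⟩
    have : m + 1 + (n + 1) = (m + n + 1) + 1 := by omega
    rw [this, Function.iterate_succ_apply, D.leibniz, hadd, smul_eq_mul, smul_eq_mul,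
      show m + n + 1 = m + 1 + n by omega, e2, show m + 1 + n = m + (n+1) by omega, mul_comm b, e1]
    simp only [← Function.iterate_succ_apply]
    push_cast; ring

theorem LN.last {L A : Type*} [CommRing L] [CommRing A] [Algebra L A] {D : Derivation L A A}
    (h : LN D) (a : A) (ha : a ≠ 0) : ∃ n : ℕ, (D^[n]) a ≠ 0 ∧ (D^[n+1]) a = 0 := by
  classical
  let n := Nat.find (h a)
  have hn : (D^[n]) a = 0 := Nat.find_spec (h a)
  have h0 : n ≠ 0 := by
    intro h0; rw [h0] at hn; exact ha hn
  refine ⟨n - 1, Nat.find_min (h a) (by omega), ?_⟩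
  rwa [Nat.sub_add_cancel (by omega)]

theorem LN.factor {L A : Type*} [CommRing L] [CommRing A] [IsDomain A] [CharZero A] [Algebra L A]
    {D : Derivation L A A} (h : LN D) (a b : A) (hab : a * b ≠ 0) (hD : D (a * b) = 0) :
    D a = 0 := by
  obtain ⟨m, hm, hm'⟩ := h.last a (left_ne_zero_of_mul hab)
  obtain ⟨n, hn, hn'⟩ := h.last b (right_ne_zero_of_mul hab)
  obtain ⟨k, hk, e⟩ := iter_mul D _ m n rfl a b hm' hn'
  rcases m with _ | m
  · simpa using hm'
  · exfalso
    rw [show m + 1 + n = (m + n) + 1 by omega, Function.iterate_succ_apply, hD,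
      iterate_map_zero] at e
    have : (k : A) ≠ 0 := by exact_mod_cast hk.ne'
    exact (mul_ne_zero this (mul_ne_zero hm hn)) e.symm

end StabEq


namespace StabEq

/-- Jacobian derivation -/
noncomputable def jac {L : Type*} [CommRing L] (a : MvPolynomial (Fin 2) L) :
    Derivation L (MvPolynomial (Fin 2) L) (MvPolynomial (Fin 2) L) :=
  pderiv 0 a • pderiv 1 - pderiv 1 a • pderiv 0

theorem jac_apply {L : Type*} [CommRing L] (a b : MvPolynomial (Fin 2) L) :
    jac a b = pderiv 0 a * pderiv 1 b - pderiv 1 a * pderiv 0 b := by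
  simp [jac]

theorem der_eq {L : Type*} [CommRing L]
    (D : Derivation L (MvPolynomial (Fin 2) L) (MvPolynomial (Fin 2) L))
    (a : MvPolynomial (Fin 2) L) : D a = D (X 0) * pderiv 0 a + D (X 1) * pderiv 1 a := by
  have : D = D (X 0) • pderiv 0 + D (X 1) • pderiv 1 := by
    apply MvPolynomial.derivation_ext
    intro i
    fin_cases i <;> simp [pderiv_X]
  conv_lhs => rw [this]
  simp

theorem pderiv_ne {L : Type*} [Field L] [CharZero L] (v : MvPolynomial (Fin 2) L)
    (hv : 0 < v.totalDegree) : pderiv 0 v ≠ 0 ∨ pderiv 1 v ≠ 0 := by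
  by_contra! h
  have h' : ∀ i, pderiv i v = 0 := by intro i; fin_cases i <;> simp [h]
  have : v = C (coeff 0 v) := by
    ext m
    rw [coeff_C]
    split_ifs with hm
    · rw [hm]
    · have : ∃ i, m i ≠ 0 := by
        by_contra! h; exact hm (by ext i; simp [h])
      obtain ⟨i, hi⟩ := this
      have e := coeff_pderiv (i := i) v (m - Finsupp.single i 1)
      rw [h', coeff_zero, tsub_add_cancel_of_le (by
        rw [Finsupp.single_le_iff]; omega)] at e
      rcases mul_eq_zero.mp e.symm with e | e
      · exact e
      · exfalso; exact Nat.cast_add_one_ne_zero _ e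
  rw [this, totalDegree_C] at hv
  exact lt_irrefl _ hv

theorem ker_iff {L : Type*} [Field L] [CharZero L]
    (D : Derivation L (MvPolynomial (Fin 2) L) (MvPolynomial (Fin 2) L)) (hD : D ≠ 0)
    (v : MvPolynomial (Fin 2) L) (hv : 0 < v.totalDegree) (hDv : D v = 0)
    (c : MvPolynomial (Fin 2) L) : D c = 0 ↔ jac v c = 0 := by
  have hDX : D (X 0) ≠ 0 ∨ D (X 1) ≠ 0 := by
    by_contra! h
    apply hD; apply MvPolynomial.derivation_ext
    intro i; fin_cases i <;> simp [h]
  rw [der_eq] at hDv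
  rw [der_eq, jac_apply]
  constructor
  · intro h
    rcases hDX with h1 | h1
    · apply mul_left_cancel₀ h1; linear_combination pderiv 1 c * hDv - pderiv 1 v * h
    · apply mul_left_cancel₀ h1; linear_combination pderiv 0 v * h - pderiv 0 c * hDv
  · intro h
    rcases pderiv_ne v hv with h1 | h1
    · apply mul_left_cancel₀ h1; linear_combination D (X 1) * h + pderiv 0 c * hDv
    · apply mul_left_cancel₀ h1; linear_combination pderiv 1 c * hDv - D (X 0) * h

theorem prime_sub {L : Type*} [Field L] [CharZero L]
    (D : Derivation L (MvPolynomial (Fin 2) L) (MvPolynomial (Fin 2) L)) (hLN : LN D)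
    (v : MvPolynomial (Fin 2) L) (hv : 0 < v.totalDegree) (hDv : D v = 0)
    (hmin : ∀ c, D c = 0 → 0 < c.totalDegree → v.totalDegree ≤ c.totalDegree) (l : L) :
    Prime (v - C l) := by
  have hne : v - C l ≠ 0 := by
    intro h; rw [sub_eq_zero.mp h, totalDegree_C] at hv; exact lt_irrefl _ hv
  have hun : ∀ a : MvPolynomial (Fin 2) L, a ≠ 0 → a.totalDegree = 0 → IsUnit a := by
    intro a ha h
    rw [totalDegree_eq_zero_iff_eq_C] at h
    rw [h]
    apply IsUnit.map
    rw [isUnit_iff_ne_zero]; intro h0; rw [h0, C_0] at h; exact ha h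
  apply Irreducible.prime
  constructor
  · intro hu
    obtain ⟨b, hb⟩ := hu.exists_right_inv
    have hb0 : b ≠ 0 := by rintro rfl; simp at hb
    have := totalDegree_mul_of_isDomain hne hb0
    rw [hb, totalDegree_one] at this
    have h0 : (v - C l).totalDegree = 0 := by omega
    rw [totalDegree_eq_zero_iff_eq_C, sub_eq_iff_eq_add, ← C_add] at h0
    rw [h0, totalDegree_C] at hv
    exact lt_irrefl _ hv
  · intro a b hab
    rw [hab] at hne
    have hD : D (a * b) = 0 := by rw [← hab, map_sub, hDv]; simp
    have ha := hLN.factor a b hne hD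
    have hb := hLN.factor b a (by rwa [mul_comm]) (by rwa [mul_comm])
    by_contra! h
    have ha' := hmin a ha (Nat.pos_of_ne_zero fun h0 => h.1 (hun _ (left_ne_zero_of_mul hne) h0))
    have hb' := hmin b hb (Nat.pos_of_ne_zero fun h0 => h.2 (hun _ (right_ne_zero_of_mul hne) h0))
    have h1 := totalDegree_mul_of_isDomain (left_ne_zero_of_mul hne) (right_ne_zero_of_mul hne)
    rw [← hab] at h1
    have := totalDegree_sub_C_le v l
    omega

/-- residue of an element algebraic modulo `v - l` -/
theorem resid {L : Type*} [Field L] [IsAlgClosed L]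
    (v : MvPolynomial (Fin 2) L) (l : L) (hp : Prime (v - C l)) (c : MvPolynomial (Fin 2) L)
    (h : IsAlgebraic L (Ideal.Quotient.mk (Ideal.span {v - C l}) c)) :
    ∃ (μ : L) (c' : MvPolynomial (Fin 2) L), c - C μ = (v - C l) * c' := by
  have : (Ideal.span {v - C l}).IsPrime := (Ideal.span_singleton_prime hp.ne_zero).mpr hp
  obtain ⟨μ, hμ⟩ := alg_const _ h
  refine ⟨μ, ?_⟩
  have : Ideal.Quotient.mk (Ideal.span {v - C l}) c = Ideal.Quotient.mk _ (C μ) := hμ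
  rw [Ideal.Quotient.eq, Ideal.mem_span_singleton] at this
  exact this

theorem ker_adjoin {L : Type*} [Field L] [CharZero L] [IsAlgClosed L]
    (D : Derivation L (MvPolynomial (Fin 2) L) (MvPolynomial (Fin 2) L)) (hLN : LN D) (hD : D ≠ 0)
    (v : MvPolynomial (Fin 2) L) (hv : 0 < v.totalDegree) (hDv : D v = 0)
    (hmin : ∀ c, D c = 0 → 0 < c.totalDegree → v.totalDegree ≤ c.totalDegree) :
    ∀ n : ℕ, ∀ c : MvPolynomial (Fin 2) L, c.totalDegree ≤ n → D c = 0 →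
      c ∈ Algebra.adjoin L {v} := by
  have hC : ∀ μ : L, C μ ∈ Algebra.adjoin L {v} := fun μ => Subalgebra.algebraMap_mem _ μ
  have hvm : v ∈ Algebra.adjoin L {v} := Algebra.subset_adjoin rfl
  intro n
  induction n with
  | zero =>
    intro c hc _
    rw [Nat.le_zero, totalDegree_eq_zero_iff_eq_C] at hc
    rw [hc]; exact hC _
  | succ n ih =>
    intro c hc hDc
    have hp := prime_sub D hLN v hv hDv hmin 0
    have h1 := red v 0 (fun _ : Unit => c) (hp.ne_zero) (dep D hD v c hDv hDc)
    rw [algebraicIndependent_unique_type_iff, Transcendental, not_not] at h1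
    obtain ⟨μ, c', hc'⟩ := resid v 0 hp c h1
    rw [C_0, sub_zero] at hc' hp
    have e : c = v * c' + C μ := by rw [← hc']; ring
    rw [e]
    refine add_mem (mul_mem hvm ?_) (hC _)
    by_cases h0 : c' = 0
    · rw [h0]; exact zero_mem _
    apply ih
    · have h2 := totalDegree_mul_of_isDomain hp.ne_zero h0
      have h3 := totalDegree_sub_C_le c μ
      rw [hc'] at h3
      omega
    · have h2 := congrArg D hc'
      rw [map_sub, hDc, D.leibniz, hDv] at h2
      simp at h2
      rcases h2 with h2 | h2
      · exact absurd h2 hp.ne_zero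
      · exact h2

theorem slice {L : Type*} [Field L] [CharZero L] [IsAlgClosed L]
    (v : MvPolynomial (Fin 2) L) (hpr : ∀ l, Prime (v - C l)) :
    ∀ n : ℕ, ∀ D : Derivation L (MvPolynomial (Fin 2) L) (MvPolynomial (Fin 2) L), LN D →
    D v = 0 → ∀ (s : MvPolynomial (Fin 2) L) (g : Polynomial L), g ≠ 0 → g.natDegree ≤ n →
    D s = Polynomial.aeval v g →
    ∃ (D' : Derivation L (MvPolynomial (Fin 2) L) (MvPolynomial (Fin 2) L))
      (s' : MvPolynomial (Fin 2) L), LN D' ∧ D' v = 0 ∧ D' s' = 1 := by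
  intro n
  induction n with
  | zero =>
    intro D hLN hDv s g hg hn hs
    rw [Polynomial.eq_C_of_natDegree_le_zero hn] at hg hs
    have hg' : g.coeff 0 ≠ 0 := by simpa using hg
    refine ⟨D, (g.coeff 0)⁻¹ • s, hLN, hDv, ?_⟩
    rw [D.map_smul, hs, Polynomial.aeval_C, Algebra.algebraMap_eq_smul_one, smul_smul,
      inv_mul_cancel₀ hg', one_smul]
  | succ n ih =>
    intro D hLN hDv s g hg hn hs
    by_cases hd : g.natDegree ≤ n
    · exact ih D hLN hDv s g hg hd hs
    obtain ⟨l, hl⟩ := IsAlgClosed.exists_root g (by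
      rw [Polynomial.degree_eq_natDegree hg]
      intro h
      have : g.natDegree = 0 := by exact_mod_cast h
      omega)
    obtain ⟨g1, rfl⟩ := Polynomial.dvd_iff_isRoot.mpr hl
    have hg1 : g1 ≠ 0 := right_ne_zero_of_mul hg
    have hdeg : g1.natDegree ≤ n := by
      rw [Polynomial.natDegree_mul (Polynomial.X_sub_C_ne_zero l) hg1,
        Polynomial.natDegree_X_sub_C] at hn
      omega
    have hp := hpr l
    have hs1 : D s = (v - C l) * Polynomial.aeval v g1 := by
      rw [hs, map_mul]; simp [MvPolynomial.algebraMap_eq]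
    have hDπ : D (v - C l) = 0 := by rw [map_sub, hDv]; simp
    by_cases hdiv : ∀ i, (v - C l) ∣ D (X i)
    · choose e he using hdiv
      let D' := mkDerivation L e
      have hDD : ∀ a, D a = (v - C l) * D' a := by
        have : D = (v - C l) • D' := by
          apply MvPolynomial.derivation_ext
          intro i; simp [D', he]
        intro a; rw [this]; rfl
      have hD'v : D' v = 0 := by
        have := hDD v
        rw [hDv] at this
        exact (mul_eq_zero.mp this.symm).resolve_left hp.ne_zero
      have hD'π : D' (v - C l) = 0 := by rw [map_sub, hD'v]; simp
      refine ih D' ?_ hD'v s g1 hg1 hdeg ?_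
      · intro a
        obtain ⟨m, hm⟩ := hLN a
        refine ⟨m, ?_⟩
        have : ∀ m : ℕ, (D^[m]) a = (v - C l)^m * (D'^[m]) a := by
          intro m
          induction m with
          | zero => simp
          | succ m ihm =>
            rw [Function.iterate_succ_apply', ihm, Function.iterate_succ_apply', hDD, D'.leibniz,
              D'.leibniz_pow, hD'π]
            simp; ring
        rw [this] at hm
        exact (mul_eq_zero.mp hm).resolve_left (pow_ne_zero _ hp.ne_zero)
      · have := hDD s
        rw [hs1] at this
        exact (mul_left_cancel₀ hp.ne_zero this).symm
    · have hpi : (Ideal.span {v - C l}).IsPrime := (Ideal.span_singleton_prime hp.ne_zero).mpr hp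
      have halg : IsAlgebraic L (Ideal.Quotient.mk (Ideal.span {v - C l}) s) := by
        by_contra htr
        apply hdiv
        intro i
        let f := Ideal.Quotient.mkₐ L (Ideal.span {v - C l})
        have hf : Function.Surjective f := Ideal.Quotient.mkₐ_surjective _ _
        have hf0 : ∀ x, f x = 0 ↔ (v - C l) ∣ x := by
          intro x
          rw [← Ideal.mem_span_singleton, ← Ideal.Quotient.eq_zero_iff_mem]; rfl
        have hker : ∀ x, f x = 0 → f (D x) = 0 := by
          intro x hx
          rw [hf0] at hx ⊢
          obtain ⟨y, rfl⟩ := hx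
          rw [D.leibniz, hDπ]; simp
        let E := Derivation.liftOfSurjective hf hker
        have hE : ∀ x, E (f x) = f (D x) := Derivation.liftOfSurjective_apply hf hker
        have : CharZero (MvPolynomial (Fin 2) L ⧸ Ideal.span {v - C l}) :=
          charZero_of_injective_algebraMap (algebraMap L _).injective
        have hind : AlgebraicIndependent L (fun _ : Unit => f s) :=
          algebraicIndependent_unique_type_iff.mpr htr
        have h3 := red v l (fun o : Option Unit => o.elim (X i) (fun _ => s)) hp.ne_zero
          (dep3 v (X i) s)
        have h4 : ¬ AlgebraicIndependent L
            (fun o : Option Unit => o.elim (f (X i)) (fun _ => f s)) := by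
          have he : (fun o : Option Unit => o.elim (f (X i)) (fun _ => f s)) =
              fun o : Option Unit => Ideal.Quotient.mk _ (o.elim (X i) (fun _ => s)) := by
            funext o
            rcases o with _ | o <;> rfl
          rw [he]; exact h3
        rw [hind.option_iff_transcendental, Transcendental, not_not] at h4
        rw [← hf0, ← hE]
        refine ker_alg E _ ?_ _ h4
        intro r hr
        refine Derivation.eqOn_adjoin (D2 := 0) ?_ hr
        rintro _ ⟨o, rfl⟩
        change E (f s) = 0
        rw [hE, hf0, hs1]
        exact Dvd.intro _ rfl
      obtain ⟨μ, s', hs'⟩ := resid v l hp s halg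
      refine ih D hLN hDv s' g1 hg1 hdeg ?_
      have := congrArg D hs'
      rw [map_sub, D.leibniz, hDπ, hs1] at this
      simp at this
      exact (this.resolve_right hp.ne_zero).symm

theorem gen_of_slice {L A : Type*} [Field L] [CharZero L] [CommRing A] [Algebra L A]
    (D : Derivation L A A) (hLN : LN D) (v s : A) (hs : D s = 1)
    (hk : ∀ c, D c = 0 → c ∈ Algebra.adjoin L {v}) : Algebra.adjoin L {v, s} = ⊤ := by
  have hsub : Algebra.adjoin L {v} ≤ Algebra.adjoin L {v, s} :=
    Algebra.adjoin_mono (by simp)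
  have hsm : s ∈ Algebra.adjoin L {v, s} := Algebra.subset_adjoin (by simp)
  have hfac : ∀ n : ℕ, ∀ c, D c = 0 → (D^[n]) (c * s ^ n) = (n.factorial : A) * c := by
    intro n
    induction n with
    | zero => intro c _; simp
    | succ n ih =>
      intro c hc
      have : D (c * s ^ (n+1)) = ((n + 1 : ℕ) * c) * s ^ n := by
        rw [D.leibniz, D.leibniz_pow, hs, hc]
        simp; ring
      rw [Function.iterate_succ_apply, this, ih _ (by rw [D.leibniz, hc]; simp),
        Nat.factorial_succ]
      push_cast; ring
  have key : ∀ n : ℕ, ∀ a, (D^[n]) a = 0 → a ∈ Algebra.adjoin L {v, s} := by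
    intro n
    induction n with
    | zero => intro a ha; simp at ha; simp [ha, zero_mem]
    | succ n ih =>
      intro a ha
      have hc : D ((D^[n]) a) = 0 := by rwa [Function.iterate_succ_apply'] at ha
      set c := (D^[n]) a with hcdef
      have hc2 : D ((n.factorial : L)⁻¹ • c) = 0 := by rw [D.map_smul, hc, smul_zero]
      have h1 := ih (a - ((n.factorial : L)⁻¹ • c) * s ^ n) (by
        rw [iterate_map_sub, hfac n _ hc2, ← hcdef]
        have : (n.factorial : A) = algebraMap L A (n.factorial : L) := by simp
        rw [this, ← Algebra.smul_def, smul_smul, mul_inv_cancel₀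
          (by exact_mod_cast n.factorial_ne_zero), one_smul, sub_self])
      have h2 : ((n.factorial : L)⁻¹ • c) * s ^ n ∈ Algebra.adjoin L {v, s} :=
        mul_mem (hsub (hk _ hc2)) (pow_mem hsm n)
      simpa using add_mem h1 h2
  rw [eq_top_iff]
  intro a _
  obtain ⟨n, hn⟩ := hLN a
  exact key n a hn

/-- structure theorem over an algebraically closed field -/
theorem structL {L : Type*} [Field L] [CharZero L] [IsAlgClosed L]
    (D : Derivation L (MvPolynomial (Fin 2) L) (MvPolynomial (Fin 2) L)) (hLN : LN D) (hD : D ≠ 0)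
    (v : MvPolynomial (Fin 2) L) (hv : 0 < v.totalDegree) (hDv : D v = 0)
    (hmin : ∀ c, D c = 0 → 0 < c.totalDegree → v.totalDegree ≤ c.totalDegree) :
    (∀ c, jac v c = 0 → c ∈ Algebra.adjoin L {v}) ∧
    ∃ s, Algebra.adjoin L {v, s} = ⊤ := by
  have hk : ∀ c, jac v c = 0 → c ∈ Algebra.adjoin L {v} := fun c hc =>
    ker_adjoin D hLN hD v hv hDv hmin _ c le_rfl ((ker_iff D hD v hv hDv c).mpr hc)
  refine ⟨hk, ?_⟩
  have : ∃ a, D a ≠ 0 := by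
    by_contra! h
    exact hD (Derivation.ext h)
  obtain ⟨a, ha⟩ := this
  obtain ⟨n, hn, hn'⟩ := hLN.last _ ha
  have e1 : (D^[n]) (D a) = D ((D^[n]) a) := by
    rw [← Function.iterate_succ_apply, Function.iterate_succ_apply']
  have e2 : D (D ((D^[n]) a)) = 0 := by
    rw [← e1]; rw [Function.iterate_succ_apply'] at hn'; exact hn'
  rw [e1] at hn
  have hm := hk _ ((ker_iff D hD v hv hDv _).mp e2)
  rw [Algebra.adjoin_singleton_eq_range_aeval] at hm
  obtain ⟨g, hg⟩ := hm
  obtain ⟨D', s, h1, h2, h3⟩ := slice v (prime_sub D hLN v hv hDv hmin) _ D hLN hDv _ g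
    (by rintro rfl; apply hn; rw [← hg]; simp) le_rfl hg.symm
  refine ⟨s, gen_of_slice D' h1 v s h3 fun c hc => hk c ?_⟩
  refine (ker_iff D' ?_ v hv h2 c).mp hc
  rintro rfl
  simp at h3

end StabEq


namespace StabEq

section ls
variable {K L : Type*} [Field K] [Field L] [Algebra K L] {σ : Type*}

/-- coefficientwise application of a linear functional -/
noncomputable def ls (ℓ : L →ₗ[K] K) (f : MvPolynomial σ L) : MvPolynomial σ K :=
  ∑ m ∈ f.support, monomial m (ℓ (coeff m f))

theorem coeff_ls (ℓ : L →ₗ[K] K) (f : MvPolynomial σ L) (m : σ →₀ ℕ) :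
    coeff m (ls ℓ f) = ℓ (coeff m f) := by
  classical
  rw [ls, coeff_sum]
  simp only [coeff_monomial]
  rw [Finset.sum_ite_eq']
  split_ifs with h
  · rfl
  · rw [notMem_support_iff.mp h, map_zero]

theorem ls_add (ℓ : L →ₗ[K] K) (f g : MvPolynomial σ L) : ls ℓ (f + g) = ls ℓ f + ls ℓ g := by
  ext m; simp [coeff_ls]

theorem ls_sub (ℓ : L →ₗ[K] K) (f g : MvPolynomial σ L) : ls ℓ (f - g) = ls ℓ f - ls ℓ g := by
  ext m; simp [coeff_ls]

theorem ls_map_mul (ℓ : L →ₗ[K] K) (a : MvPolynomial σ K) (f : MvPolynomial σ L) :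
    ls ℓ (map (algebraMap K L) a * f) = a * ls ℓ f := by
  classical
  ext m
  simp only [coeff_ls, coeff_mul, map_sum, coeff_map]
  refine Finset.sum_congr rfl fun x _ => ?_
  rw [← Algebra.smul_def, map_smul, smul_eq_mul]

theorem ls_pderiv (ℓ : L →ₗ[K] K) (i : σ) (f : MvPolynomial σ L) :
    ls ℓ (pderiv i f) = pderiv i (ls ℓ f) := by
  ext m
  simp only [coeff_ls, coeff_pderiv]
  have : ((m i : L) + 1) = algebraMap K L (m i + 1) := by simp
  rw [this, mul_comm, ← Algebra.smul_def, map_smul, smul_eq_mul, mul_comm]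

theorem ls_smul_map (ℓ : L →ₗ[K] K) (c : L) (a : MvPolynomial σ K) :
    ls ℓ (c • map (algebraMap K L) a) = ℓ c • a := by
  ext m
  simp only [coeff_ls, coeff_smul, coeff_map, smul_eq_mul]
  rw [mul_comm, ← Algebra.smul_def, map_smul, smul_eq_mul, mul_comm]

theorem ls_map (ℓ : L →ₗ[K] K) (h1 : ℓ 1 = 1) (a : MvPolynomial σ K) :
    ls ℓ (map (algebraMap K L) a) = a := by
  have := ls_smul_map ℓ 1 a
  rwa [one_smul, h1, one_smul] at this

theorem ls_adjoin (ℓ : L →ₗ[K] K) (T : Set (MvPolynomial σ K)) (b : MvPolynomial σ L)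
    (hb : b ∈ Algebra.adjoin L (map (algebraMap K L) '' T)) : ls ℓ b ∈ Algebra.adjoin K T := by
  have hb' : b ∈ Submodule.span L
      (Submonoid.closure (map (algebraMap K L) '' T) : Set (MvPolynomial σ L)) := by
    rw [← Algebra.adjoin_eq_span]; exact hb
  suffices h : ∀ c : L, ls ℓ (c • b) ∈ Algebra.adjoin K T by simpa using h 1
  clear hb
  induction hb' using Submodule.span_induction with
  | mem x hx =>
    intro c
    have : x ∈ (Submonoid.closure T).map (map (algebraMap K L) : MvPolynomial σ K →+* _) := by
      rw [MonoidHom.map_mclosure]; exact hx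
    obtain ⟨y, hy, rfl⟩ := this
    change ls ℓ (c • map (algebraMap K L) y) ∈ _
    rw [ls_smul_map]
    refine Subalgebra.smul_mem _ ?_ _
    exact (Submonoid.closure_le (S := (Algebra.adjoin K T).toSubmonoid)).mpr
      Algebra.subset_adjoin hy
  | zero => 
    intro c
    have : ls ℓ (c • (0 : MvPolynomial σ L)) = 0 := by ext m; simp [coeff_ls]
    rw [this]; exact zero_mem _
  | add x y _ _ hx hy => intro c; rw [smul_add, ls_add]; exact add_mem (hx c) (hy c)
  | smul a x _ hx => intro c; rw [smul_smul]; exact hx _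

theorem exists_func (c : L) (hc : c ≠ 0) : ∃ ℓ : L →ₗ[K] K, ℓ c = 1 := by
  obtain ⟨ℓ, -, h⟩ := LinearMap.exists_extend_of_notMem (p := (⊥ : Submodule K L)) (v := c)
    (0 : (⊥ : Submodule K L) →ₗ[K] K) (by simpa using hc) 1
  exact ⟨ℓ, h⟩

end ls

theorem jac_unit {L : Type*} [Field L] [CharZero L] (v s : MvPolynomial (Fin 2) L)
    (h : Algebra.adjoin L {v, s} = ⊤) : ∃ μ : L, μ ≠ 0 ∧ jac v s = C μ := by
  have anti : ∀ a b : MvPolynomial (Fin 2) L, jac a b = - jac b a := by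
    intro a b; rw [jac_apply, jac_apply]; ring
  set u := jac v s with hu
  have key : ∀ a, u ∣ jac a v → u ∣ jac a s → ∀ b, u ∣ jac a b := by
    intro a h1 h2 b
    have hb : b ∈ Algebra.adjoin L {v, s} := by rw [h]; trivial
    induction hb using Algebra.adjoin_induction with
    | mem x hx =>
      rcases hx with rfl | rfl
      · exact h1
      · exact h2
    | algebraMap r => simp
    | add x y _ _ hx hy => rw [map_add]; exact dvd_add hx hy
    | mul x y _ _ hx hy =>
      rw [Derivation.leibniz]
      exact dvd_add (Dvd.dvd.mul_left hy _) (Dvd.dvd.mul_left hx _)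
  have hvv : ∀ a : MvPolynomial (Fin 2) L, jac a a = 0 := by
    intro a; rw [jac_apply]; ring
  have kv := key v (by rw [hvv]; exact dvd_zero _) dvd_rfl
  have ks := key s (by rw [anti, dvd_neg]) (by rw [hvv]; exact dvd_zero _)
  have h1 := key (X 0) (by rw [anti, dvd_neg]; exact kv _) (by rw [anti, dvd_neg]; exact ks _) (X 1)
  have h2 : jac (X 0 : MvPolynomial (Fin 2) L) (X 1) = 1 := by
    rw [jac_apply]; simp [pderiv_X]
  rw [h2] at h1
  have h3 := isUnit_of_dvd_one h1
  rw [MvPolynomial.isUnit_iff_eq_C_of_isReduced] at h3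
  obtain ⟨μ, hμ, e⟩ := h3
  exact ⟨μ, hμ.ne_zero, e⟩

theorem structK {K : Type*} [Field K] [CharZero K]
    (D : Derivation K (MvPolynomial (Fin 2) K) (MvPolynomial (Fin 2) K)) (hLN : LN D) (hD : D ≠ 0)
    (p : MvPolynomial (Fin 2) K) (hp : 0 < p.totalDegree) (hDp : D p = 0) :
    ∃ v s : MvPolynomial (Fin 2) K, 0 < v.totalDegree ∧ Algebra.adjoin K {v, s} = ⊤ ∧
      (∀ c, jac v c = 0 → c ∈ Algebra.adjoin K {v}) ∧ p ∈ Algebra.adjoin K {v} := by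
  let L := AlgebraicClosure K
  have : CharZero L := charZero_of_injective_algebraMap (algebraMap K L).injective
  let ι : MvPolynomial (Fin 2) K →+* MvPolynomial (Fin 2) L := map (algebraMap K L)
  have hι : Function.Injective ι := map_injective _ (algebraMap K L).injective
  classical
  have hex : ∃ n, ∃ c : MvPolynomial (Fin 2) K, D c = 0 ∧ 0 < c.totalDegree ∧ c.totalDegree = n :=
    ⟨_, p, hDp, hp, rfl⟩
  obtain ⟨v, hDv, hv, hvn⟩ := Nat.find_spec hex
  have hmin : ∀ c : MvPolynomial (Fin 2) K, D c = 0 → 0 < c.totalDegree →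
      v.totalDegree ≤ c.totalDegree := by
    intro c h1 h2
    rw [hvn]
    exact Nat.find_min' hex ⟨c, h1, h2, rfl⟩
  let DL : Derivation L (MvPolynomial (Fin 2) L) (MvPolynomial (Fin 2) L) :=
    mkDerivation L (fun i => ι (D (X i)))
  have hDLX : ∀ i, DL (X i) = ι (D (X i)) := fun i => mkDerivation_X _ _ _
  have hDLι : ∀ a, DL (ι a) = ι (D a) := by
    intro a
    rw [der_eq, der_eq D, hDLX, hDLX]
    simp only [ι, map_add, map_mul, pderiv_map]
  have hlsD : ∀ (ℓ : L →ₗ[K] K) f, ls ℓ (DL f) = D (ls ℓ f) := by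
    intro ℓ f
    rw [der_eq, der_eq D, hDLX, hDLX, ls_add]
    simp only [ι, ls_map_mul, ls_pderiv]
  have hjac : ∀ (ℓ : L →ₗ[K] K) a f, ls ℓ (jac (ι a) f) = jac a (ls ℓ f) := by
    intro ℓ a f
    rw [jac_apply, jac_apply, ls_sub]
    simp only [ι, pderiv_map, ls_map_mul, ls_pderiv]
  have hjacι : ∀ a b, jac (ι a) (ι b) = ι (jac a b) := by
    intro a b
    rw [jac_apply, jac_apply]
    simp only [ι, pderiv_map, map_sub, map_mul]
  have hDL : DL ≠ 0 := by
    intro h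
    apply hD
    ext1 a
    apply hι
    rw [← hDLι, h]; simp
  have hLNL : LN DL := by
    intro f
    induction f using MvPolynomial.induction_on' with
    | monomial m c =>
      obtain ⟨n, hn⟩ := hLN (monomial m 1)
      refine ⟨n, ?_⟩
      have : ∀ n : ℕ, (DL^[n]) (monomial m c) = c • ι ((D^[n]) (monomial m 1)) := by
        intro n
        induction n with
        | zero => simp [ι, smul_monomial]
        | succ n ih =>
          rw [Function.iterate_succ_apply', ih, Function.iterate_succ_apply', DL.map_smul, hDLι]
      rw [this, hn]; simp
    | add f g hf hg =>
      obtain ⟨m, hm⟩ := hf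
      obtain ⟨n, hn⟩ := hg
      refine ⟨n + m, ?_⟩
      rw [iterate_map_add, Function.iterate_add_apply, hm, iterate_map_zero, add_comm n m,
        Function.iterate_add_apply, hn, iterate_map_zero, add_zero]
  have htd : ∀ a, (ι a).totalDegree = a.totalDegree := fun a => by
    simp only [totalDegree, ι, support_map_of_injective _ (algebraMap K L).injective]
  have hvL : 0 < (ι v).totalDegree := by rw [htd]; exact hv
  have hDvL : DL (ι v) = 0 := by rw [hDLι, hDv, map_zero]
  have hminL : ∀ c, DL c = 0 → 0 < c.totalDegree → (ι v).totalDegree ≤ c.totalDegree := by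
    intro c hc h0
    rw [htd]
    obtain ⟨m, hm, hmd⟩ : ∃ m ∈ c.support, m ≠ 0 := by
      by_contra! h
      have : c = C (coeff 0 c) := by
        ext m
        rw [coeff_C]
        split_ifs with h'
        · rw [h']
        · by_contra h2
          exact h' (h m (mem_support_iff.mpr h2)).symm
      rw [this, totalDegree_C] at h0
      exact lt_irrefl _ h0
    obtain ⟨ℓ, hℓ⟩ := exists_func (K := K) (coeff m c) (mem_support_iff.mp hm)
    have hle : (ls ℓ c).totalDegree ≤ c.totalDegree := by
      apply Finset.sup_mono
      intro k hk
      rw [mem_support_iff, coeff_ls] at hk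
      rw [mem_support_iff]
      intro h; rw [h, map_zero] at hk; exact hk rfl
    refine le_trans (hmin (ls ℓ c) ?_ ?_) hle
    · rw [← hlsD, hc]; ext; simp [coeff_ls]
    · rw [Nat.pos_iff_ne_zero]
      intro h
      rw [totalDegree_eq_zero_iff_eq_C] at h
      have h1 := coeff_ls ℓ c m
      rw [h, coeff_C, if_neg (Ne.symm hmd), hℓ] at h1
      exact zero_ne_one h1
  obtain ⟨hk, s, hs⟩ := structL DL hLNL hDL (ι v) hvL hDvL hminL
  obtain ⟨ℓ, hℓ⟩ := exists_func (K := K) (1 : L) one_ne_zero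
  have hkK : ∀ c, jac v c = 0 → c ∈ Algebra.adjoin K {v} := by
    intro c hc
    have h1 := hk (ι c) (by rw [hjacι, hc, map_zero])
    have h2 := ls_adjoin ℓ {v} (ι c) (by rw [Set.image_singleton]; exact h1)
    rwa [ls_map ℓ hℓ] at h2
  obtain ⟨μ, hμ, hu⟩ := jac_unit _ _ hs
  have hs1 : jac (ι v) (μ⁻¹ • s) = 1 := by
    rw [Derivation.map_smul, hu, smul_eq_C_mul, ← C_mul, inv_mul_cancel₀ hμ, C_1]
  let s0 := ls ℓ (μ⁻¹ • s)
  have hs0 : jac v s0 = 1 := by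
    rw [← hjac, hs1]
    have := ls_map (σ := Fin 2) ℓ hℓ 1
    rwa [map_one] at this
  have hdiff : μ⁻¹ • s - ι s0 ∈ Algebra.adjoin L {ι v} := by
    apply hk
    rw [map_sub, hs1, hjacι, hs0, map_one, sub_self]
  have hgen : Algebra.adjoin L (map (algebraMap K L) '' {v, s0}) = ⊤ := by
    rw [Set.image_pair]
    rw [eq_top_iff, ← hs]
    apply Algebra.adjoin_le
    have h1 : ι s0 ∈ Algebra.adjoin L {ι v, ι s0} := Algebra.subset_adjoin (by simp)
    rintro _ (rfl | rfl)
    · exact Algebra.subset_adjoin (by simp [ι])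
    · have h2 := add_mem (Algebra.adjoin_mono (by simp) hdiff) h1
      rw [sub_add_cancel] at h2
      have h3 := Subalgebra.smul_mem _ h2 μ
      rw [smul_smul, mul_inv_cancel₀ hμ, one_smul] at h3
      exact h3
  refine ⟨v, s0, hv, ?_, hkK, hkK p ((ker_iff D hD v hv hDv p).mp hDp)⟩
  rw [eq_top_iff]
  intro a _
  have := ls_adjoin ℓ {v, s0} (ι a) (by rw [hgen]; trivial)
  rwa [ls_map ℓ hℓ] at this

end StabEq

namespace StabEq

section
variable {K : Type*} [Field K] {m : ℕ} {e : Fin 2 → Fin m}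

theorem rng_of (he : Function.Injective e) (f : MvPolynomial (Fin m) K)
    (h : ∀ j, j ∉ Set.range e → degreeOf j f = 0) : ∃ a, rename e a = f := by
  apply exists_rename_eq_of_vars_subset_range f e he
  intro j hj
  by_contra hc
  exact (mem_vars_iff_degreeOf_ne_zero.1 hj) (h j hc)

theorem of_rng (a : MvPolynomial (Fin 2) K) (j : Fin m) (hj : j ∉ Set.range e) :
    degreeOf j (rename e a) = 0 := by
  by_contra hc
  have := mem_vars_rename e a (mem_vars_iff_degreeOf_ne_zero.2 hc)
  obtain ⟨i, -, hi⟩ := this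
  exact hj ⟨i, hi⟩

theorem factor_rng (he : Function.Injective e) (f g : MvPolynomial (Fin m) K)
    (a : MvPolynomial (Fin 2) K) (ha : f * g = rename e a) (h0 : f * g ≠ 0) :
    ∃ b, rename e b = f := by
  apply rng_of he
  intro j hj
  have h1 := of_rng a j hj
  rw [← ha, degreeOf_mul_eq (left_ne_zero_of_mul h0) (right_ne_zero_of_mul h0)] at h1
  omega

theorem deg_of_pderiv [CharZero K] (j : Fin m) (f : MvPolynomial (Fin m) K) (h : pderiv j f = 0) :
    degreeOf j f = 0 := by
  by_contra hc
  obtain ⟨d, hd, hdj⟩ := (mem_vars_iff_mem_support _).1 (mem_vars_iff_degreeOf_ne_zero.2 hc) 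
  have hdj : d j ≠ 0 := Finsupp.mem_support_iff.1 hdj
  have h1 := coeff_pderiv (R := K) (m := d - Finsupp.single j 1) (i := j) f
  have h2 : d - Finsupp.single j 1 + Finsupp.single j 1 = d := by
    apply tsub_add_cancel_of_le
    rw [Finsupp.single_le_iff]; omega
  rw [h, h2, coeff_zero] at h1
  have h3 : ((((d - Finsupp.single j 1 : Fin m →₀ ℕ) j : ℕ) : K) + 1) ≠ 0 := Nat.cast_add_one_ne_zero _
  rcases mul_eq_zero.1 h1.symm with h4 | h4
  · exact (mem_support_iff.1 hd) h4
  · exact h3 h4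

theorem deg_pderiv_lt (j : Fin m) (f : MvPolynomial (Fin m) K) (h : pderiv j f ≠ 0) :
    degreeOf j (pderiv j f) < degreeOf j f := by
  have key : ∀ d ∈ (pderiv j f).support, d j < degreeOf j f := by
    intro d hd
    have h1 := mem_support_iff.1 hd
    rw [coeff_pderiv] at h1
    have h2 := monomial_le_degreeOf j (mem_support_iff.2 (left_ne_zero_of_mul h1))
    simp at h2
    omega
  obtain ⟨d, hd⟩ := support_nonempty.2 h
  have := key d hd
  rw [degreeOf_lt_iff (by omega)]
  exact key

theorem core {R : Type*} [CommRing R] [IsDomain R] [DecompositionMonoid R] {P Q U V : R} (hr : IsRelPrime P Q)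
    (h : P * U + Q * V = 0) (h0 : P ≠ 0 ∨ Q ≠ 0) : ∃ k, U = Q * k ∧ V = - P * k := by
  have h1 : Q ∣ P * U := ⟨-V, by linear_combination h⟩
  have h2 : P ∣ Q * V := ⟨-U, by linear_combination h⟩
  obtain ⟨k, hk⟩ := hr.symm.dvd_of_dvd_mul_left h1
  obtain ⟨l, hl⟩ := hr.dvd_of_dvd_mul_left h2
  rcases h0 with h0 | h0
  · by_cases hQ : Q = 0
    · subst hQ
      have : IsUnit P := hr dvd_rfl (dvd_zero _)
      obtain ⟨u, hu⟩ := this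
      refine ⟨-(↑u⁻¹) * V, ?_, ?_⟩
      · simpa using hk
      · rw [← hu]; simp
    refine ⟨k, hk, ?_⟩
    apply mul_left_cancel₀ hQ
    rw [hk] at h
    linear_combination h
  · refine ⟨k, hk, ?_⟩
    apply mul_left_cancel₀ h0
    rw [hk] at h
    linear_combination h

theorem chain (θ : MvPolynomial (Fin 2) K →ₐ[K] MvPolynomial (Fin m) K) (j : Fin m)
    (a : MvPolynomial (Fin 2) K) :
    pderiv j (θ a) = θ (pderiv 0 a) * pderiv j (θ (X 0)) + θ (pderiv 1 a) * pderiv j (θ (X 1)) := by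
  induction a using MvPolynomial.induction_on with
  | C c => 
    have : θ (C c) = C c := θ.commutes c
    simp [this]
  | add a b ha hb => simp only [map_add, ha, hb]; ring
  | mul_X a i ha =>
    simp only [map_mul, Derivation.leibniz, ha, smul_eq_mul, map_add]
    fin_cases i
    · simp [pderiv_X]; ring
    · simp [pderiv_X]; ring

theorem surj_bij (f : MvPolynomial (Fin 2) K →ₐ[K] MvPolynomial (Fin 2) K)
    (hf : Function.Surjective f) : Function.Bijective f := by
  refine ⟨?_, hf⟩
  let F : ℕ →o Ideal (MvPolynomial (Fin 2) K) :=
    ⟨fun n => RingHom.ker (f ^ n), by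
      apply monotone_nat_of_le_succ
      intro n x hx
      rw [RingHom.mem_ker] at hx ⊢
      rw [pow_succ', AlgHom.mul_apply, hx, map_zero]⟩
  obtain ⟨n, hn⟩ := monotone_stabilizes_iff_noetherian.2
    (inferInstance : IsNoetherian (MvPolynomial (Fin 2) K) (MvPolynomial (Fin 2) K)) F
  have hs : ∀ n : ℕ, Function.Surjective (f ^ n) := by
    intro n
    induction n with
    | zero => exact fun x => ⟨x, rfl⟩
    | succ n ih =>
      intro x
      obtain ⟨y, rfl⟩ := hf x
      obtain ⟨z, rfl⟩ := ih y
      exact ⟨z, by rw [pow_succ', AlgHom.mul_apply]⟩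
  rw [injective_iff_map_eq_zero]
  intro a ha
  obtain ⟨b, rfl⟩ := hs n a
  have h1 : b ∈ F (n+1) := by
    change b ∈ RingHom.ker (f ^ (n+1))
    rw [RingHom.mem_ker, pow_succ', AlgHom.mul_apply, ha]
  rw [← hn (n+1) (by omega)] at h1
  exact h1

theorem part1 [CharZero K] (he : Function.Injective e)
    (φ : MvPolynomial (Fin m) K ≃ₐ[K] MvPolynomial (Fin m) K) (p q : MvPolynomial (Fin 2) K)
    (h : φ (rename e p) = rename e q) (hp : 0 < p.totalDegree) (a0 : MvPolynomial (Fin 2) K)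
    (ha0 : ¬ ∃ b, rename e b = φ (rename e a0)) :
    ∃ D : Derivation K (MvPolynomial (Fin 2) K) (MvPolynomial (Fin 2) K), LN D ∧ D ≠ 0 ∧ D p = 0 := by
  obtain ⟨j, hj, hja⟩ : ∃ j, j ∉ Set.range e ∧ degreeOf j (φ (rename e a0)) ≠ 0 := by
    by_contra hc
    push Not at hc
    exact ha0 (rng_of he _ hc)
  let θ : MvPolynomial (Fin 2) K →ₐ[K] MvPolynomial (Fin m) K := (φ : _ →ₐ[K] _).comp (rename e)
  have hθ : ∀ a, θ a = φ (rename e a) := fun a => rfl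
  have hθi : Function.Injective θ := φ.injective.comp (rename_injective e he)
  have hθ0 : ∀ a, a ≠ 0 → θ a ≠ 0 := fun a ha h => ha (hθi (by rw [h, map_zero]))
  obtain ⟨p1, p2, g, hr, h1, h2, h0⟩ : ∃ p1 p2 g : MvPolynomial (Fin 2) K, IsRelPrime p1 p2 ∧
      g * p1 = pderiv 0 p ∧ g * p2 = pderiv 1 p ∧ (pderiv 0 p ≠ 0 ∨ pderiv 1 p ≠ 0) := by
    rcases pderiv_ne p hp with h | h
    · obtain ⟨a, b, c, x, y, z⟩ := UniqueFactorizationMonoid.exists_reduced_factors' (pderiv 1 p) (pderiv 0 p) h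
      exact ⟨b, a, c, x.symm, z, y, Or.inl h⟩
    · obtain ⟨a, b, c, x, y, z⟩ := UniqueFactorizationMonoid.exists_reduced_factors' (pderiv 0 p) (pderiv 1 p) h
      exact ⟨a, b, c, x, y, z, Or.inr h⟩
  have hg : g ≠ 0 := by
    rintro rfl
    simp at h1 h2
    rcases h0 with h0 | h0
    · exact h0 h1.symm
    · exact h0 h2.symm
  have h12 : p1 ≠ 0 ∨ p2 ≠ 0 := by
    rcases h0 with h0 | h0
    · left; rintro rfl; exact h0 (by rw [← h1, mul_zero])
    · right; rintro rfl; exact h0 (by rw [← h2, mul_zero])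
  have hq : pderiv j (θ p) = 0 := by
    rw [hθ, h]
    apply pderiv_eq_zero_of_notMem_vars
    intro hc
    exact (mem_vars_iff_degreeOf_ne_zero.1 hc) (of_rng q j hj)
  have hrel : θ p1 * pderiv j (θ (X 0)) + θ p2 * pderiv j (θ (X 1)) = 0 := by
    rw [chain, ← h1, ← h2, map_mul, map_mul] at hq
    apply mul_left_cancel₀ (hθ0 g hg)
    linear_combination hq
  have hρ : ∀ a : MvPolynomial (Fin 2) K, killCompl he (rename e a) = a := killCompl_rename_app he
  have hrp : IsRelPrime (θ p1) (θ p2) := by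
    rintro d ⟨x, hx⟩ ⟨y, hy⟩
    have hx' : φ.symm d * φ.symm x = rename e p1 := by
      rw [← map_mul, ← hx, hθ, AlgEquiv.symm_apply_apply]
    have hy' : φ.symm d * φ.symm y = rename e p2 := by
      rw [← map_mul, ← hy, hθ, AlgEquiv.symm_apply_apply]
    obtain ⟨b, hb⟩ : ∃ b, rename e b = φ.symm d := by
      rcases h12 with h | h
      · exact factor_rng he _ _ p1 hx' (by rw [hx']; exact fun hh => h (rename_injective e he (by rw [hh, map_zero])))
      · exact factor_rng he _ _ p2 hy' (by rw [hy']; exact fun hh => h (rename_injective e he (by rw [hh, map_zero])))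
    have hb1 : b ∣ p1 := ⟨killCompl he (φ.symm x), by
      rw [← hρ p1, ← hx', ← hb, map_mul, hρ]⟩
    have hb2 : b ∣ p2 := ⟨killCompl he (φ.symm y), by
      rw [← hρ p2, ← hy', ← hb, map_mul, hρ]⟩
    have hu := (hr hb1 hb2).map θ
    rwa [hθ, hb, AlgEquiv.apply_symm_apply] at hu
  obtain ⟨k, hU, hV⟩ := core hrp hrel (h12.imp (hθ0 _) (hθ0 _))
  let D : Derivation K (MvPolynomial (Fin 2) K) (MvPolynomial (Fin 2) K) :=
    p2 • pderiv 0 - p1 • pderiv 1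
  have hD : ∀ a, D a = p2 * pderiv 0 a - p1 * pderiv 1 a := fun a => rfl
  have hch : ∀ a, pderiv j (θ a) = k * θ (D a) := by
    intro a
    rw [chain, hU, hV, hD, map_sub, map_mul, map_mul]; ring
  have ha0' : pderiv j (θ a0) ≠ 0 := fun hc => hja (deg_of_pderiv j _ hc)
  have hk : k ≠ 0 := by
    rintro rfl
    exact ha0' (by rw [hch, zero_mul])
  refine ⟨D, ?_, ?_, ?_⟩
  · have step : ∀ a, D a ≠ 0 → degreeOf j (θ (D a)) < degreeOf j (θ a) := by
      intro a ha
      have h3 : pderiv j (θ a) ≠ 0 := by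
        rw [hch]; exact mul_ne_zero hk (hθ0 _ ha)
      have h4 := deg_pderiv_lt j _ h3
      rw [hch, degreeOf_mul_eq hk (hθ0 _ ha)] at h4
      omega
    have : ∀ n a, degreeOf j (θ a) ≤ n → (D^[n+1]) a = 0 := by
      intro n
      induction n with
      | zero =>
        intro a ha
        by_contra hc
        have := step a hc
        omega
      | succ n ih =>
        intro a ha
        rw [Function.iterate_succ_apply]
        by_cases hc : D a = 0
        · rw [hc]
          exact iterate_map_zero D (n + 1)
        · exact ih _ (by have := step a hc; omega)
    exact fun a => ⟨_, this _ a le_rfl⟩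
  · intro hc
    apply ha0'
    rw [hch, hc]; simp
  · rw [hD, ← h1, ← h2]; ring

end
end StabEq

namespace StabEq

section
variable {K : Type*} [Field K] {m : ℕ} {e : Fin 2 → Fin m}

theorem const_of_deg (p : MvPolynomial (Fin 2) K) (h : ¬ 0 < p.totalDegree) : ∃ c, p = C c :=
  ⟨_, totalDegree_eq_zero_iff_eq_C.1 (by omega)⟩

theorem map_rng (he : Function.Injective e)
    (φ : MvPolynomial (Fin m) K ≃ₐ[K] MvPolynomial (Fin m) K) (p q v : MvPolynomial (Fin 2) K)
    (f : Polynomial K) (hf : Polynomial.aeval v f = p)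
    (h : φ (rename e p) = rename e q) (hq : 0 < q.totalDegree) :
    ∃ a, rename e a = φ (rename e v) ∧ Polynomial.aeval a f = q := by
  have h1 : Polynomial.aeval (φ (rename e v)) f = rename e q := by
    rw [← h, ← hf, ← Polynomial.aeval_algHom_apply, ← Polynomial.aeval_algHom_apply]
  have h2 : φ (rename e v) * Polynomial.aeval (φ (rename e v)) f.divX
      = rename e (q - C (f.coeff 0)) := by
    have h3 := congrArg (Polynomial.aeval (φ (rename e v))) (Polynomial.divX_mul_X_add f)
    rw [map_add, map_mul, Polynomial.aeval_X, Polynomial.aeval_C, algebraMap_eq] at h3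
    rw [map_sub, ← h1, rename_C]
    linear_combination h3
  obtain ⟨a, ha⟩ := factor_rng he _ _ _ h2 (by
    rw [h2]
    intro hc
    have : q - C (f.coeff 0) = 0 := rename_injective e he (by rw [hc, map_zero])
    rw [sub_eq_zero] at this
    rw [this, totalDegree_C] at hq
    omega)
  refine ⟨a, ha, rename_injective e he ?_⟩
  rw [← h1, ← ha, Polynomial.aeval_algHom_apply]

theorem in_adj [CharZero K] (a q v : MvPolynomial (Fin 2) K) (f : Polynomial K)
    (hf : Polynomial.aeval a f = q) (hq : 0 < q.totalDegree) (hj : q ∈ Algebra.adjoin K {v}) :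
    jac v a = 0 := by
  have hv : ∀ s ∈ Algebra.adjoin K {v}, jac v s = 0 := by
    intro s hs
    rw [Algebra.adjoin_singleton_eq_range_aeval] at hs
    obtain ⟨g, rfl⟩ := hs
    change jac v (Polynomial.aeval v g) = 0
    rw [Derivation.map_aeval, jac_apply]
    simp [mul_comm]
  refine ker_alg (jac v) (Algebra.adjoin K {v}) hv a ?_
  have hn : 0 < f.natDegree := by
    by_contra hc
    rw [Polynomial.eq_C_of_natDegree_eq_zero (p := f) (by omega)] at hf
    rw [← hf] at hq
    simp [algebraMap_eq] at hq
  refine ⟨f.map (algebraMap K _) - Polynomial.C ⟨q, hj⟩, ?_, ?_⟩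
  · intro hc
    have := congrArg (fun g => Polynomial.coeff g f.natDegree) hc
    simp [Polynomial.coeff_C, hn.ne'] at this
    rw [this] at hn
    simp at hn
  · rw [map_sub, Polynomial.aeval_map_algebraMap, hf, Polynomial.aeval_C]
    exact sub_self q

theorem aut_of (v s : MvPolynomial (Fin 2) K) (h : Algebra.adjoin K {v, s} = ⊤) :
    ∃ σ : MvPolynomial (Fin 2) K ≃ₐ[K] MvPolynomial (Fin 2) K, σ (X 0) = v := by
  have hs : Function.Surjective (aeval ![v, s] : MvPolynomial (Fin 2) K →ₐ[K] MvPolynomial (Fin 2) K) := by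
    rw [← AlgHom.range_eq_top, ← Algebra.adjoin_range_eq_range_aeval, ← h]
    congr 1
    simp [Matrix.range_cons, Set.pair_comm]
  exact ⟨AlgEquiv.ofBijective _ (surj_bij _ hs), by simp⟩

theorem easy (he : Function.Injective e)
    (φ : MvPolynomial (Fin m) K ≃ₐ[K] MvPolynomial (Fin m) K) (p q : MvPolynomial (Fin 2) K)
    (h : φ (rename e p) = rename e q)
    (ha : ∀ a, ∃ b, rename e b = φ (rename e a)) :
    ∃ α : MvPolynomial (Fin 2) K ≃ₐ[K] MvPolynomial (Fin 2) K, α p = q := by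
  have hρ : ∀ a : MvPolynomial (Fin 2) K, killCompl he (rename e a) = a := killCompl_rename_app he
  let γ : MvPolynomial (Fin 2) K →ₐ[K] MvPolynomial (Fin 2) K :=
    (killCompl he).comp ((φ.symm : _ →ₐ[K] _).comp (rename e))
  have hγ : ∀ a, γ a = killCompl he (φ.symm (rename e a)) := fun a => rfl
  have hs : Function.Surjective γ := by
    intro a
    obtain ⟨b, hb⟩ := ha a
    exact ⟨b, by rw [hγ, hb, AlgEquiv.symm_apply_apply, hρ]⟩
  refine ⟨(AlgEquiv.ofBijective γ (surj_bij γ hs)).symm, ?_⟩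
  rw [AlgEquiv.symm_apply_eq]
  change p = γ q
  rw [hγ, ← h, AlgEquiv.symm_apply_apply, hρ]

theorem main [CharZero K] (he : Function.Injective e)
    (φ : MvPolynomial (Fin m) K ≃ₐ[K] MvPolynomial (Fin m) K) (p q : MvPolynomial (Fin 2) K)
    (h : φ (rename e p) = rename e q) :
    ∃ α : MvPolynomial (Fin 2) K ≃ₐ[K] MvPolynomial (Fin 2) K, α p = q := by
  have h' : φ.symm (rename e q) = rename e p := by rw [← h, AlgEquiv.symm_apply_apply]
  have hC : ∀ c : K, φ (C c) = C c := fun c => φ.commutes c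
  have hC' : ∀ c : K, φ.symm (C c) = C c := fun c => φ.symm.commutes c
  by_cases hp : 0 < p.totalDegree
  swap
  · obtain ⟨c, rfl⟩ := const_of_deg p hp
    refine ⟨AlgEquiv.refl, rename_injective e he ?_⟩
    rw [← h, rename_C, hC]
    simp
  by_cases hq : 0 < q.totalDegree
  swap
  · obtain ⟨c, rfl⟩ := const_of_deg q hq
    refine ⟨AlgEquiv.refl, rename_injective e he ?_⟩
    rw [rename_C, hC'] at h'
    rw [rename_C, h']
    simp
  by_cases h1 : ∀ a, ∃ b, rename e b = φ (rename e a)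
  · exact easy he φ p q h h1
  by_cases h2 : ∀ a, ∃ b, rename e b = φ.symm (rename e a)
  · obtain ⟨α, hα⟩ := easy he φ.symm q p h' h2
    exact ⟨α.symm, by rw [← hα, AlgEquiv.symm_apply_apply]⟩
  push Not at h1 h2
  obtain ⟨a1, h1⟩ := h1
  obtain ⟨a2, h2⟩ := h2
  obtain ⟨D, hD, hD0, hDp⟩ := part1 he φ p q h hp a1 (by push Not; exact h1)
  obtain ⟨E, hE, hE0, hEq⟩ := part1 he φ.symm q p h' hq a2 (by push Not; exact h2)
  obtain ⟨v, s, hv, hvs, hvk, hpv⟩ := structK D hD hD0 p hp hDp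
  obtain ⟨w, t, hw, hwt, hwk, hqw⟩ := structK E hE hE0 q hq hEq
  have hpv' := hpv
  rw [Algebra.adjoin_singleton_eq_range_aeval] at hpv' hqw
  obtain ⟨f, hf⟩ := hpv'
  obtain ⟨g, hg⟩ := hqw
  obtain ⟨a, ha, haq⟩ := map_rng he φ p q v f hf h hq
  obtain ⟨b, hb, hbp⟩ := map_rng he φ.symm q p w g hg h' hp
  have hbv := hvk b (in_adj b p v g hbp hp hpv)
  rw [Algebra.adjoin_singleton_eq_range_aeval] at hbv
  obtain ⟨r, hr⟩ := hbv
  have hr : Polynomial.aeval v r = b := hr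
  have hwa : w = Polynomial.aeval a r := by
    apply rename_injective e he
    rw [← Polynomial.aeval_algHom_apply, ha, Polynomial.aeval_algHom_apply,
      Polynomial.aeval_algHom_apply, hr, hb, AlgEquiv.apply_symm_apply]
  have hat : Algebra.adjoin K {a, t} = ⊤ := by
    rw [eq_top_iff, ← hwt]
    apply Algebra.adjoin_le
    rintro x (rfl | rfl)
    · rw [hwa]
      exact Polynomial.aeval_mem_adjoin_singleton K a |> fun hh =>
        Algebra.adjoin_mono (by simp) hh
    · exact Algebra.subset_adjoin (by simp)
  obtain ⟨σ, hσ⟩ := aut_of v s hvs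
  obtain ⟨τ, hτ⟩ := aut_of a t hat
  refine ⟨σ.symm.trans τ, ?_⟩
  have hva : (σ.symm.trans τ) v = a := by
    rw [AlgEquiv.trans_apply, ← hσ, AlgEquiv.symm_apply_apply, hτ]
  have hf : Polynomial.aeval v f = p := hf
  rw [← hf, ← Polynomial.aeval_algHom_apply, hva, haq]

end
end StabEq

/-- **Stable equivalence implies equivalence for two-variable polynomials.**
If `p, q ∈ K[x, y]` are stably equivalent (some `K`-algebra automorphism of
`K[x₁, …, xₘ]`, `m > 2`, maps the image of `p` under the natural inclusion to
the image of `q`), then they are equivalent (some automorphism of `K[x, y]`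
maps `p` to `q`). -/
theorem stable_equivalence_two_variables
    (K : Type*) [Field K] [CharZero K]
    (p q : MvPolynomial (Fin 2) K)
    (h : ∃ (m : ℕ) (hm : 2 < m)
        (φ : MvPolynomial (Fin m) K ≃ₐ[K] MvPolynomial (Fin m) K),
        φ (rename (Fin.castLE hm.le) p) = rename (Fin.castLE hm.le) q) :
    ∃ α : MvPolynomial (Fin 2) K ≃ₐ[K] MvPolynomial (Fin 2) K, α p = q := by
  obtain ⟨m, hm, φ, hφ⟩ := h
  exact StabEq.main (Fin.castLE_injective hm.le) φ p q hφ
end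

section
/- Fix an integer n ≥ 1 and a field K of characteristic 0. Suppose the Stable coordinate conjecture holds for n, i.e., for every p ∈ K[x₁, …, xₙ], if there is a K-algebra automorphism φ of K[x₁, …, x_{n+1}] with φ(p) = x₁ (p viewed via the natural inclusion), then there is a K-algebra automorphism α of K[x₁, …, xₙ] with α(p) = x₁. Then the Cancellation conjecture holds for n: for every commutative K-algebra R, if the polynomial ring R[t] is isomorphic as a K-algebra to K[x₁, …, xₙ], then R is isomorphic as a K-algebra to K[x₁, …, x_{n−1}]. -/
open MvPolynomial

theorem aux_cancel {K A B : Type} [Field K] [CommRing A] [Algebra K A] [CommRing B] [Algebra K B]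
    (e : Polynomial A ≃ₐ[K] Polynomial B) (he : e Polynomial.X = Polynomial.X) (a : A) :
    (e.symm (Polynomial.C ((e (Polynomial.C a)).coeff 0))).coeff 0 = a := by
  have h := Polynomial.divX_mul_X_add (e (Polynomial.C a))
  have h2 := congrArg e.symm h
  have hX : e.symm Polynomial.X = Polynomial.X := by rw [← he]; simp
  rw [map_add, map_mul, hX, AlgEquiv.symm_apply_apply] at h2
  have h3 := congrArg (fun q => Polynomial.coeff q 0) h2
  simpa using h3

/-- The induced map on constant terms. -/
noncomputable def auxHom {K A B : Type} [Field K] [CommRing A] [Algebra K A] [CommRing B]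
    [Algebra K B] (e : Polynomial A ≃ₐ[K] Polynomial B) : A →ₐ[K] B where
  toRingHom := (Polynomial.constantCoeff.comp (e : Polynomial A →+* Polynomial B)).comp
    Polynomial.C
  commutes' r := by
    change (e (algebraMap K (Polynomial A) r)).coeff 0 = _
    rw [AlgEquiv.commutes, Polynomial.algebraMap_apply, Polynomial.coeff_C_zero]

theorem auxHom_apply {K A B : Type} [Field K] [CommRing A] [Algebra K A] [CommRing B]
    [Algebra K B] (e : Polynomial A ≃ₐ[K] Polynomial B) (a : A) :
    auxHom e a = (e (Polynomial.C a)).coeff 0 := rfl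

theorem aux_equiv {K A B : Type} [Field K] [CommRing A] [Algebra K A] [CommRing B] [Algebra K B]
    (e : Polynomial A ≃ₐ[K] Polynomial B) (he : e Polynomial.X = Polynomial.X) :
    Nonempty (A ≃ₐ[K] B) := by
  have hX : e.symm Polynomial.X = Polynomial.X := by rw [← he]; simp
  refine ⟨AlgEquiv.ofAlgHom (auxHom e) (auxHom e.symm) ?_ ?_⟩
  · ext b
    simpa [auxHom_apply] using aux_cancel e.symm hX b
  · ext a
    simpa [auxHom_apply] using aux_cancel e he a

theorem aux_rename {K : Type} [Field K] (n : ℕ) (p : MvPolynomial (Fin n) K) :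
    finSuccEquiv K n (renameEquiv K (finRotate (n + 1)) (rename Fin.castSucc p))
      = Polynomial.C p := by
  induction p using MvPolynomial.induction_on with
  | C a => simp [finSuccEquiv_apply]
  | add p q hp hq => simp only [map_add, hp, hq]
  | mul_X p i hp =>
    have h1 : finSuccEquiv K n (renameEquiv K (finRotate (n + 1))
        (rename Fin.castSucc (X i))) = Polynomial.C (X i) := by
      rw [rename_X, renameEquiv_apply, rename_X, finRotate_succ_apply, Fin.coeSucc_eq_succ,
        finSuccEquiv_X_succ]
    rw [map_mul, map_mul, map_mul, hp, h1, Polynomial.C_mul]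

/-- **The Stable coordinate conjecture implies the Cancellation conjecture.**
Fix `n ≥ 1` and a field `K` of characteristic 0.  If every `p ∈ K[x₁, …, xₙ]`
which becomes a coordinate of `K[x₁, …, x_{n+1}]` is already a coordinate of
`K[x₁, …, xₙ]`, then for every commutative `K`-algebra `R`, `R[t] ≅ K[x₁, …, xₙ]`
implies `R ≅ K[x₁, …, x_{n−1}]`. -/
theorem stable_coordinate_implies_cancellation
    (K : Type) [Field K] [CharZero K] (n : ℕ) (hn : 1 ≤ n)
    (SCC : ∀ p : MvPolynomial (Fin n) K,
      (∃ φ : MvPolynomial (Fin (n + 1)) K ≃ₐ[K] MvPolynomial (Fin (n + 1)) K,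
        φ (rename Fin.castSucc p) = X 0) →
      ∃ α : MvPolynomial (Fin n) K ≃ₐ[K] MvPolynomial (Fin n) K, α p = X ⟨0, hn⟩) :
    ∀ (R : Type) [CommRing R] [Algebra K R],
      Nonempty (Polynomial R ≃ₐ[K] MvPolynomial (Fin n) K) →
      Nonempty (R ≃ₐ[K] MvPolynomial (Fin (n - 1)) K) := by
  intro R _ _ ⟨e⟩
  obtain ⟨m, rfl⟩ : ∃ m, n = m + 1 := ⟨n - 1, by omega⟩
  obtain ⟨α, hα⟩ := SCC (e Polynomial.X) ⟨((renameEquiv K (finRotate (m + 1 + 1))).trans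
    (finSuccEquiv K (m + 1))).trans ((Polynomial.mapAlgEquiv e.symm).trans
      (((Polynomial.Bivariate.swap (R := R)).restrictScalars K).trans
        ((Polynomial.mapAlgEquiv e).trans (finSuccEquiv K (m + 1)).symm))), by
    simp only [AlgEquiv.trans_apply, aux_rename]
    rw [AlgEquiv.symm_apply_eq, finSuccEquiv_X_zero]
    simp [Polynomial.Bivariate.swap_X]⟩
  refine aux_equiv ((e.trans α).trans (finSuccEquiv K m)) ?_
  simp only [AlgEquiv.trans_apply, hα]
  exact finSuccEquiv_X_zero
end

section
/- Let K be a field of characteristic 0 and let R = K[x₁, …, xₙ, z] be a polynomial ring in n + 1 variables. Let (u, v) be a z-reduced pair of algebraically independent polynomials in R such that both u and v have positive degree in z. Then for any nonconstant two-variable polynomial p ∈ K[X, Y], the polynomial p(u, v) also has positive degree in z. -/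
open MvPolynomial

/-- A pair `(u, v)` of polynomials is `z`-reduced (where `z` is a distinguished
variable) if the sum of the degrees in `z` cannot be decreased by an invertible
linear transformation `(u, v) ↦ (au + bv, cu + dv)` (`ad − bc ≠ 0`), nor by an
elementary transformation `(u, v) ↦ (u + μ·vᵏ, v)` or `(u, v) ↦ (u, v + μ·uᵏ)`
with `μ ≠ 0`, `k ≥ 2`. -/
def IsZReduced {K : Type*} [CommRing K] {σ : Type*} [DecidableEq σ]
    (z : σ) (u v : MvPolynomial σ K) : Prop :=
  (∀ a b c d : K, a * d - b * c ≠ 0 →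
    degreeOf z u + degreeOf z v ≤
      degreeOf z (C a * u + C b * v) + degreeOf z (C c * u + C d * v)) ∧
  (∀ μ : K, μ ≠ 0 → ∀ k : ℕ, 2 ≤ k →
    degreeOf z u + degreeOf z v ≤ degreeOf z (u + C μ * v ^ k) + degreeOf z v) ∧
  (∀ μ : K, μ ≠ 0 → ∀ k : ℕ, 2 ≤ k →
    degreeOf z u + degreeOf z v ≤ degreeOf z u + degreeOf z (v + C μ * u ^ k))

theorem chain2 {K R : Type*} [CommRing K] [CommRing R] [Algebra K R] (D : Derivation K R R)
    (u v : R) (q : MvPolynomial (Fin 2) K) :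
    D (aeval ![u, v] q) = aeval ![u, v] (pderiv 0 q) * D u + aeval ![u, v] (pderiv 1 q) * D v := by
  induction q using MvPolynomial.induction_on with
  | C a => simp
  | add p q hp hq => simp only [map_add, hp, hq]; ring
  | mul_X p i h =>
    fin_cases i <;> simp [Derivation.leibniz, h, pderiv_X] <;> ring

theorem degreeOf_pderiv_ne {K σ : Type*} [Field K] (z i : σ) (hi : i ≠ z) (f : MvPolynomial σ K) :
    degreeOf z (pderiv i f) ≤ degreeOf z f := by
  classical
  rw [degreeOf_le_iff]
  intro d hd
  rw [mem_support_iff, coeff_pderiv] at hd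
  have h := monomial_le_degreeOf z (mem_support_iff.2 (left_ne_zero_of_mul hd))
  simpa [hi] using h

theorem degreeOf_pderiv_self {K σ : Type*} [Field K] (z : σ) (f : MvPolynomial σ K) :
    degreeOf z (pderiv z f) ≤ degreeOf z f - 1 := by
  classical
  rw [degreeOf_le_iff]
  intro d hd
  rw [mem_support_iff, coeff_pderiv] at hd
  have h := monomial_le_degreeOf z (mem_support_iff.2 (left_ne_zero_of_mul hd))
  simp at h
  omega

theorem pderiv_self_zero {K σ : Type*} [Field K] (z : σ) (f : MvPolynomial σ K)
    (h : degreeOf z f = 0) : pderiv z f = 0 := by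
  classical
  ext d
  rw [coeff_pderiv, coeff_zero]
  by_contra hd
  have h := monomial_le_degreeOf z (mem_support_iff.2 (left_ne_zero_of_mul hd))
  simp at h
  omega

theorem pderiv_ne_zero_of_degreeOf {K σ : Type*} [Field K] [CharZero K] (z : σ)
    (f : MvPolynomial σ K) (h : degreeOf z f ≠ 0) : pderiv z f ≠ 0 := by
  classical
  intro h0
  apply h
  have : degreeOf z f ≤ 0 := by
    rw [degreeOf_le_iff]
    intro d hd
    by_contra hz
    have h1 := coeff_pderiv (i := z) f (d - Finsupp.single z 1)
    rw [h0, coeff_zero, Finsupp.sub_add_single_one_cancel (by omega)] at h1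
    rw [mem_support_iff] at hd
    rcases mul_eq_zero.1 h1.symm with h2 | h2
    · exact hd h2
    · exact Nat.cast_add_one_ne_zero _ h2
  omega

theorem key_deriv {K σ : Type*} [Field K] [CharZero K] (z : σ)
    (u v : MvPolynomial σ K) (hu : 0 < degreeOf z u)
    (p : MvPolynomial (Fin 2) K) (hz : degreeOf z (aeval ![u, v] p) = 0)
    (hc : ∃ i, degreeOf i (aeval ![u, v] p) ≠ 0) (q : MvPolynomial (Fin 2) K) :
    degreeOf z (aeval ![u, v] (pderiv 1 q)) + 1 ≤ degreeOf z (aeval ![u, v] q) + degreeOf z u := by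
  obtain ⟨i, hi⟩ := hc
  have hiz : i ≠ z := by rintro rfl; exact hi hz
  have hfi := pderiv_ne_zero_of_degreeOf i _ hi
  have hfz := pderiv_self_zero z _ hz
  have huz := pderiv_ne_zero_of_degreeOf z u hu.ne'
  have hJ : pderiv i u * pderiv z v - pderiv z u * pderiv i v ≠ 0 := by
    intro h0
    rw [chain2] at hfz hfi
    apply mul_ne_zero hfi huz
    linear_combination pderiv i u * hfz - aeval ![u, v] (pderiv 1 p) * h0
  by_cases h1 : aeval ![u, v] (pderiv 1 q) = 0
  · rw [h1, degreeOf_zero]; omega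
  have e : aeval ![u, v] (pderiv 1 q) * (pderiv i u * pderiv z v - pderiv z u * pderiv i v)
      = pderiv i u * pderiv z (aeval ![u, v] q) - pderiv z u * pderiv i (aeval ![u, v] q) := by
    rw [chain2, chain2]; ring
  have e2 := congrArg (degreeOf z) e
  rw [degreeOf_mul_eq h1 hJ] at e2
  have b1 := degreeOf_sub_le z (pderiv i u * pderiv z (aeval ![u, v] q))
    (pderiv z u * pderiv i (aeval ![u, v] q))
  have b2 := degreeOf_mul_le z (pderiv i u) (pderiv z (aeval ![u, v] q))
  have b3 := degreeOf_mul_le z (pderiv z u) (pderiv i (aeval ![u, v] q))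
  have b4 := degreeOf_pderiv_ne z i hiz u
  have b5 := degreeOf_pderiv_ne z i hiz (aeval ![u, v] q)
  have b6 := degreeOf_pderiv_self z u
  have b7 := degreeOf_pderiv_self z (aeval ![u, v] q)
  by_cases hq : degreeOf z (aeval ![u, v] q) = 0
  · rw [pderiv_self_zero z _ hq, mul_zero, degreeOf_zero] at b1 b2
    rw [pderiv_self_zero z _ hq, mul_zero] at e2
    rw [le_max_iff] at b1
    omega
  · rw [le_max_iff] at b1
    omega

open Polynomial in
theorem core_coeff {K A : Type*} [Field K] [CommRing A] [IsDomain A] [Algebra K A]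
    (U V : A[X]) (w : ℕ) (q : MvPolynomial (Fin 2) K) (S : Finset (Fin 2 →₀ ℕ))
    (hS : ∀ d, d ∈ S → U.natDegree * d 0 + V.natDegree * d 1 = w)
    (hq : ∀ d, d ∉ S → q.coeff d ≠ 0 → U.natDegree * d 0 + V.natDegree * d 1 < w) :
    (MvPolynomial.aeval ![U, V] q).coeff w =
      ∑ d ∈ S, algebraMap K A (q.coeff d) * (U.leadingCoeff ^ d 0 * V.leadingCoeff ^ d 1) := by
  classical
  rw [MvPolynomial.aeval_def, MvPolynomial.eval₂_eq', finsetSum_coeff]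
  have h1 : ∀ d : Fin 2 →₀ ℕ, (algebraMap K A[X] (q.coeff d) * ∏ i, ![U, V] i ^ d i).coeff w =
      if d ∈ S then algebraMap K A (q.coeff d) * (U.leadingCoeff ^ d 0 * V.leadingCoeff ^ d 1)
      else 0 := by
    intro d
    rw [Fin.prod_univ_two, Polynomial.algebraMap_apply, Polynomial.coeff_C_mul]
    simp only [Matrix.cons_val_zero, Matrix.cons_val_one]
    split_ifs with hd
    · congr 1
      rw [← hS d hd, ← leadingCoeff_pow, ← leadingCoeff_pow, mul_comm U.natDegree,
        mul_comm V.natDegree, ← natDegree_pow, ← natDegree_pow, coeff_mul_degree_add_degree]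
    · by_cases hc : q.coeff d = 0
      · simp [hc]
      · rw [coeff_eq_zero_of_natDegree_lt, mul_zero]
        refine lt_of_le_of_lt natDegree_mul_le ?_
        rw [natDegree_pow, natDegree_pow, mul_comm, mul_comm (d 1)]
        exact hq d hd hc
  rw [Finset.sum_congr rfl (fun d _ => h1 d), ← Finset.sum_filter]
  apply Finset.sum_subset_zero_on_sdiff
  · intro d hd; exact (Finset.mem_filter.1 hd).2
  · intro d hd
    simp only [Finset.mem_sdiff, Finset.mem_filter, not_and, MvPolynomial.mem_support_iff] at hd
    by_cases hc : q.coeff d = 0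
    · simp [hc]
    · exact absurd hd.1 (hd.2 hc)
  · intros; rfl

theorem theta_coeff {K : Type*} [Field K] (q : MvPolynomial (Fin 2) K) (s : K) (d : Fin 2 →₀ ℕ) :
    (X 1 * pderiv 1 q - C s * q).coeff d = ((d 1 : K) - s) * q.coeff d := by
  classical
  rw [coeff_sub, coeff_C_mul]
  have : (X 1 * pderiv 1 q).coeff d = (d 1 : K) * q.coeff d := by
    induction q using MvPolynomial.induction_on' with
    | add p q hp hq => simp only [map_add, mul_add, coeff_add, hp, hq]
    | monomial m r =>
      rw [X_mul_pderiv_monomial, coeff_smul, nsmul_eq_mul, coeff_monomial]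
      split_ifs with h
      · rw [h]
      · simp
  rw [this]; ring

open Polynomial in
theorem theta_iter {K A : Type*} [Field K] [CommRing A] [IsDomain A] [Algebra K A]
    (U V : A[X]) (hU : 0 < U.natDegree)
    (H : ∀ q : MvPolynomial (Fin 2) K, (MvPolynomial.aeval ![U, V] (pderiv 1 q)).natDegree + 1 ≤
      (MvPolynomial.aeval ![U, V] q).natDegree + U.natDegree)
    (p : MvPolynomial (Fin 2) K) (hp : (MvPolynomial.aeval ![U, V] p).natDegree = 0)
    (T : Finset ℕ) :
    ∃ q : MvPolynomial (Fin 2) K,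
      (∀ d, q.coeff d = (∏ t ∈ T, ((d 1 : K) - t)) * p.coeff d) ∧
      (MvPolynomial.aeval ![U, V] q).natDegree ≤ T.card * (U.natDegree + V.natDegree - 1) := by
  classical
  induction T using Finset.induction_on with
  | empty => exact ⟨p, by simp, by simp [hp]⟩
  | insert t T ht ih =>
    obtain ⟨q, h1, h2⟩ := ih
    refine ⟨MvPolynomial.X 1 * pderiv 1 q - MvPolynomial.C (t : K) * q, ?_, ?_⟩
    · intro d
      rw [theta_coeff, h1, Finset.prod_insert ht, mul_assoc]
    · rw [Finset.card_insert_of_notMem ht, add_mul, one_mul]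
      have h3 := H q
      rw [map_sub, map_mul, map_mul, MvPolynomial.aeval_X, MvPolynomial.aeval_C]
      refine (natDegree_sub_le _ _).trans (max_le ?_ ?_)
      · refine natDegree_mul_le.trans ?_
        simp only [Matrix.cons_val_one]
        generalize T.card * (U.natDegree + V.natDegree - 1) = B at *
        simp only [Matrix.cons_val_fin_one]
        omega
      · rw [Polynomial.algebraMap_apply]
        refine (natDegree_C_mul_le _ _).trans ?_
        omega

open Polynomial in
theorem core {K A : Type*} [Field K] [CharZero K] [CommRing A] [IsDomain A] [Algebra K A]
    (U V : A[X]) (hU : 0 < U.natDegree) (hV : 0 < V.natDegree)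
    (H : ∀ q : MvPolynomial (Fin 2) K, (MvPolynomial.aeval ![U, V] (pderiv 1 q)).natDegree + 1 ≤
      (MvPolynomial.aeval ![U, V] q).natDegree + U.natDegree)
    (p : MvPolynomial (Fin 2) K) (hp : (MvPolynomial.aeval ![U, V] p).natDegree = 0)
    (hp0 : 0 < p.totalDegree)
    (g m' n' : ℕ) (hm : U.natDegree = g * m') (hn : V.natDegree = g * n')
    (hco : Nat.Coprime m' n') :
    (m' = 1 ∨ n' = 1) ∧ ∀ (F : Type*) [Field F] [Algebra K F] [Algebra A F] [IsScalarTower K A F]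
      [FaithfulSMul A F],
      IsAlgebraic K (algebraMap A F V.leadingCoeff ^ m' / algebraMap A F U.leadingCoeff ^ n') := by
  classical
  have hg : 0 < g := Nat.pos_of_ne_zero (by rintro rfl; simp at hm; omega)
  have hm' : 0 < m' := Nat.pos_of_ne_zero (by rintro rfl; simp at hm; omega)
  have hn' : 0 < n' := Nat.pos_of_ne_zero (by rintro rfl; simp at hn; omega)
  have hUl : U.leadingCoeff ≠ 0 := by
    rw [Ne, leadingCoeff_eq_zero]; rintro rfl; simp at hU
  have hVl : V.leadingCoeff ≠ 0 := by
    rw [Ne, leadingCoeff_eq_zero]; rintro rfl; simp at hV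
  obtain ⟨wt, hwt⟩ : ∃ wt : (Fin 2 →₀ ℕ) → ℕ,
      ∀ d, wt d = U.natDegree * d 0 + V.natDegree * d 1 := ⟨_, fun _ => rfl⟩
  have hpne : p ≠ 0 := by rintro rfl; simp at hp0
  obtain ⟨w, hw⟩ : ∃ w, w = p.support.sup wt := ⟨_, rfl⟩
  obtain ⟨S, hSdef⟩ : ∃ S, S = p.support.filter (fun d => wt d = w) := ⟨_, rfl⟩
  have hSw : ∀ d ∈ S, U.natDegree * d 0 + V.natDegree * d 1 = w := by
    intro d hd; rw [hSdef, Finset.mem_filter] at hd; rw [← hwt]; exact hd.2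
  have hSc : ∀ d ∈ S, p.coeff d ≠ 0 := by
    intro d hd; rw [hSdef, Finset.mem_filter, MvPolynomial.mem_support_iff] at hd; exact hd.1
  have hlt : ∀ d, d ∉ S → p.coeff d ≠ 0 → U.natDegree * d 0 + V.natDegree * d 1 < w := by
    intro d hd hc
    rw [hSdef, Finset.mem_filter, MvPolynomial.mem_support_iff] at hd
    rw [← hwt]
    have : wt d ≤ w := hw ▸ Finset.le_sup (MvPolynomial.mem_support_iff.2 hc)
    exact lt_of_le_of_ne this (fun h => hd ⟨hc, h⟩)
  have hwpos : 0 < w := by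
    by_contra h0
    have : p.totalDegree = 0 := by
      rw [MvPolynomial.totalDegree_eq_zero_iff]
      intro d hd i
      have h1 : wt d ≤ w := hw ▸ Finset.le_sup hd
      rw [hwt] at h1
      have h2 : U.natDegree * d 0 = 0 := by omega
      have h3 : V.natDegree * d 1 = 0 := by omega
      fin_cases i
      · exact (Nat.mul_eq_zero.1 h2).resolve_left hU.ne'
      · exact (Nat.mul_eq_zero.1 h3).resolve_left hV.ne'
    omega
  obtain ⟨d₁, hd₁⟩ : S.Nonempty := by
    obtain ⟨d, hd, hdw⟩ := Finset.exists_mem_eq_sup p.support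
      (MvPolynomial.support_nonempty.2 hpne) wt
    exact ⟨d, by rw [hSdef, Finset.mem_filter]; exact ⟨hd, by rw [hw, hdw]⟩⟩
  -- elements of `S`
  have hdiff : ∀ d ∈ S, m' * d 0 + n' * d 1 = m' * d₁ 0 + n' * d₁ 1 := by
    intro d hd
    have h1 := hSw d hd
    have h2 := hSw d₁ hd₁
    rw [← h2, hm, hn] at h1
    apply Nat.eq_of_mul_eq_mul_left hg
    linarith
  have hmod : ∀ d ∈ S, d 1 % m' = d₁ 1 % m' := by
    intro d hd
    have h : n' * d 1 ≡ n' * d₁ 1 [MOD m'] := by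
      have h := congrArg (· % m') (hdiff d hd)
      simpa [Nat.ModEq, Nat.add_mod] using h
    exact Nat.ModEq.cancel_left_of_coprime hco h
  have hinj : ∀ d ∈ S, ∀ e ∈ S, d 1 / m' = e 1 / m' → d = e := by
    intro d hd e he hde
    have h1 : d 1 = e 1 := by
      rw [← Nat.div_add_mod (d 1) m', ← Nat.div_add_mod (e 1) m', hde, hmod d hd, hmod e he]
    have h0 : d 0 = e 0 := by
      have := (hdiff d hd).trans (hdiff e he).symm
      rw [h1] at this
      exact Nat.eq_of_mul_eq_mul_left hm' (by omega)
    ext i; fin_cases i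
    · exact h0
    · exact h1
  have hcard : (S.card - 1) * (V.natDegree * m') ≤ w := by
    have h1 : S.card ≤ (Finset.range (w / (V.natDegree * m') + 1)).card := by
      apply Finset.card_le_card_of_injOn (fun d => d 1 / m')
      · intro d hd
        simp only [Finset.coe_range, Set.mem_Iio]
        rw [← Nat.div_div_eq_div_mul]
        apply Nat.lt_succ_of_le
        apply Nat.div_le_div_right
        rw [Nat.le_div_iff_mul_le hV]
        have := hSw d hd
        nlinarith
      · intro d hd e he h
        exact hinj d hd e he h
    rw [Finset.card_range] at h1
    calc (S.card - 1) * (V.natDegree * m') ≤ (w / (V.natDegree * m')) * (V.natDegree * m') :=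
          Nat.mul_le_mul_right _ (Nat.sub_le_of_le_add h1)
      _ ≤ w := Nat.div_mul_le_self _ _
  constructor
  · obtain ⟨q, hq1, hq2⟩ := theta_iter U V hU H p hp ((S.erase d₁).image (fun d => d 1))
    have hT : ((S.erase d₁).image (fun d => d 1)).card ≤ S.card - 1 := by
      refine Finset.card_image_le.trans ?_
      rw [Finset.card_erase_of_mem hd₁]
    have hco := core_coeff U V w q S hSw (by
      intro d hd hc
      apply hlt d hd
      rw [hq1] at hc
      exact right_ne_zero_of_mul hc)
    rw [Finset.sum_eq_single_of_mem d₁ hd₁] at hco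
    · have hne : (MvPolynomial.aeval ![U, V] q).coeff w ≠ 0 := by
        rw [hco]
        apply mul_ne_zero _ (mul_ne_zero (pow_ne_zero _ hUl) (pow_ne_zero _ hVl))
        rw [Ne, map_eq_zero_iff _ (algebraMap K A).injective, hq1]
        apply mul_ne_zero _ (hSc d₁ hd₁)
        rw [Finset.prod_ne_zero_iff]
        intro t ht
        rw [sub_ne_zero, Ne, Nat.cast_inj]
        intro h
        rw [Finset.mem_image] at ht
        obtain ⟨d, hd, hdt⟩ := ht
        rw [Finset.mem_erase] at hd
        exact hd.1 (hinj d hd.2 d₁ hd₁ (by rw [hdt, h]))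
      have h3 := (le_natDegree_of_ne_zero hne).trans hq2
      have h4 := h3.trans (Nat.mul_le_mul_right _ hT)
      have h5 : 0 < S.card - 1 := by
        by_contra h; simp [Nat.eq_zero_of_not_pos h] at h4; omega
      have h6 : V.natDegree * m' ≤ U.natDegree + V.natDegree - 1 :=
        Nat.le_of_mul_le_mul_left (hcard.trans h4) h5
      have h7 : g * (n' * m') < g * (m' + n') := by
        rw [hm, hn] at h6
        have : 0 < g * m' := Nat.mul_pos hg hm'
        have e : g * (n' * m') = g * n' * m' := by ring
        rw [e, mul_add]; omega
      have h8 := Nat.lt_of_mul_lt_mul_left h7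
      by_contra hcon
      push Not at hcon
      have a1 : 2 ≤ m' := by omega
      have a2 : 2 ≤ n' := by omega
      nlinarith
    · intro d hd hne
      rw [hq1, Finset.prod_eq_zero (i := d 1)]
      · simp
      · exact Finset.mem_image_of_mem _ (Finset.mem_erase.2 ⟨hne, hd⟩)
      · simp
  · intro F _ _ _ _ _
    have hco := core_coeff U V w p S hSw hlt
    rw [coeff_eq_zero_of_natDegree_lt (by omega)] at hco
    have hinjF : Function.Injective (algebraMap A F) := FaithfulSMul.algebraMap_injective A F
    have ha : algebraMap A F U.leadingCoeff ≠ 0 := by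
      rwa [Ne, map_eq_zero_iff _ hinjF]
    have hc : algebraMap A F V.leadingCoeff ≠ 0 := by
      rwa [Ne, map_eq_zero_iff _ hinjF]
    have hco' := congrArg (algebraMap A F) hco
    rw [map_zero, map_sum] at hco'
    simp only [map_mul, map_pow, ← IsScalarTower.algebraMap_apply] at hco'
    generalize algebraMap A F U.leadingCoeff = a at *
    generalize algebraMap A F V.leadingCoeff = c at *
    refine ⟨∑ d ∈ S, Polynomial.monomial (d 1 / m') (p.coeff d), ?_, ?_⟩
    · intro h0
      have := congrArg (fun f => Polynomial.coeff f (d₁ 1 / m')) h0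
      simp only [finsetSum_coeff, Polynomial.coeff_monomial, Polynomial.coeff_zero] at this
      rw [Finset.sum_eq_single_of_mem d₁ hd₁] at this
      · simp at this; exact hSc d₁ hd₁ this
      · intro d hd hne
        rw [if_neg]
        intro h; exact hne (hinj d hd d₁ hd₁ h)
    · rw [map_sum]
      have hfac : a ^ (d₁ 0 + n' * (d₁ 1 / m')) * c ^ (d₁ 1 % m') ≠ 0 :=
        mul_ne_zero (pow_ne_zero _ ha) (pow_ne_zero _ hc)
      apply (mul_eq_zero.1 _).resolve_left hfac
      rw [Finset.mul_sum, eq_comm, hco']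
      apply Finset.sum_congr rfl
      intro d hd
      rw [Polynomial.aeval_monomial]
      have e1 : d₁ 0 + n' * (d₁ 1 / m') = d 0 + n' * (d 1 / m') := by
        have h1 := hdiff d hd
        have h2 := Nat.div_add_mod (d 1) m'
        have h3 := Nat.div_add_mod (d₁ 1) m'
        rw [hmod d hd] at h2
        rw [← h2, ← h3] at h1
        apply Nat.eq_of_mul_eq_mul_left hm'
        simp only [Nat.mul_add_mod_self_left, Nat.mod_mod] at h1
        nlinarith
      rw [e1, ← hmod d hd]
      have e2 : c ^ d 1 = c ^ (d 1 % m') * (c ^ m') ^ (d 1 / m') := by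
        rw [← pow_mul, ← pow_add, Nat.mod_add_div]
      rw [e2, div_pow, pow_add, ← pow_mul a n']
      field_simp

theorem alg_const {K σ : Type*} [Field K] (a c : MvPolynomial σ K) (ha : a ≠ 0) (hc : c ≠ 0)
    (h : IsAlgebraic K (algebraMap (MvPolynomial σ K) (FractionRing (MvPolynomial σ K)) c /
      algebraMap (MvPolynomial σ K) (FractionRing (MvPolynomial σ K)) a)) :
    ∃ s : K, s ≠ 0 ∧ c = C s * a := by
  have hinj := IsFractionRing.injective (MvPolynomial σ K) (FractionRing (MvPolynomial σ K))
  have ha' : algebraMap (MvPolynomial σ K) (FractionRing (MvPolynomial σ K)) a ≠ 0 := by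
    rwa [Ne, map_eq_zero_iff _ hinj]
  have h1 : IsIntegral (MvPolynomial σ K) _ := h.isIntegral.tower_top
  obtain ⟨y, hy⟩ := IsIntegrallyClosed.isIntegral_iff.1 h1
  rw [← hy, isAlgebraic_algebraMap_iff hinj] at h
  have hcy : c = y * a := by
    apply hinj
    rw [map_mul, hy, div_mul_cancel₀ _ ha']
  have hy0 : y ≠ 0 := by rintro rfl; simp at hcy; exact hc hcy
  obtain ⟨s, hs, rfl⟩ := isUnit_iff_eq_C_of_isReduced.1 (h.isIntegral.isUnit hy0)
  exact ⟨s, hs.ne_zero, hcy⟩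

open Polynomial in
theorem drop_poly {A : Type*} [CommRing A] [IsDomain A] (U V : A[X]) (hU : 0 < U.natDegree)
    (k : ℕ) (hk : U.natDegree = V.natDegree * k) (t : A)
    (h : U.leadingCoeff + t * V.leadingCoeff ^ k = 0) :
    (U + Polynomial.C t * V ^ k).natDegree < U.natDegree := by
  have h1 : (U + Polynomial.C t * V ^ k).natDegree ≤ U.natDegree := by
    refine natDegree_add_le_of_degree_le le_rfl ((natDegree_C_mul_le _ _).trans ?_)
    rw [natDegree_pow, hk, mul_comm]
  refine lt_of_le_of_ne h1 (fun he => ?_)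
  have h2 : (U + Polynomial.C t * V ^ k).coeff U.natDegree = 0 := by
    rw [Polynomial.coeff_add, Polynomial.coeff_C_mul, hk, mul_comm V.natDegree,
      coeff_pow_mul_natDegree, mul_comm k, ← hk]
    exact h
  rw [← he] at h2
  have h3 := leadingCoeff_eq_zero.1 h2
  rw [h3, Polynomial.natDegree_zero] at he
  omega

theorem exists_equiv (K : Type*) [Field K] (n : ℕ) :
    ∃ φ : MvPolynomial (Fin (n + 1)) K ≃ₐ[K] Polynomial (MvPolynomial (Fin n) K),
      ∀ f, (φ f).natDegree = degreeOf (Fin.last n) f := by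
  refine ⟨(renameEquiv K (Equiv.swap (Fin.last n) 0)).trans (finSuccEquiv K n), fun f => ?_⟩
  rw [AlgEquiv.trans_apply, natDegree_finSuccEquiv, renameEquiv_apply]
  have := degreeOf_rename_of_injective (p := f) (Equiv.swap (Fin.last n) 0).injective (Fin.last n)
  rwa [Equiv.swap_apply_left] at this

/-- **Proposition 2.3.**  Let `R = K[x₁, …, xₙ, z]` and let `(u, v)` be a
`z`-reduced pair of algebraically independent polynomials in `R`, both actually
depending on `z`.  Then for any nonconstant two-variable polynomial `p`, the
polynomial `p(u, v)` depends on `z` too. -/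
theorem substitution_depends_on_z
    (K : Type*) [Field K] [CharZero K] (n : ℕ)
    (u v : MvPolynomial (Fin (n + 1)) K)
    (huv : AlgebraicIndependent K ![u, v])
    (hred : IsZReduced (Fin.last n) u v)
    (hu : 0 < degreeOf (Fin.last n) u)
    (hv : 0 < degreeOf (Fin.last n) v)
    (p : MvPolynomial (Fin 2) K) (hp : 0 < p.totalDegree) :
    0 < degreeOf (Fin.last n) (aeval ![u, v] p) := by
  by_contra hcon
  have hz : degreeOf (Fin.last n) (aeval ![u, v] p) = 0 := by omega
  have hc : ∃ i, degreeOf i (aeval ![u, v] p) ≠ 0 := by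
    by_contra hall
    push Not at hall
    have h1 : (aeval ![u, v] p).totalDegree = 0 := by
      rw [totalDegree_eq_zero_iff]
      intro d hd i
      have := monomial_le_degreeOf i hd
      rw [hall i] at this
      omega
    rw [totalDegree_eq_zero_iff_eq_C] at h1
    have h2 : aeval ![u, v] p = aeval ![u, v] (C (coeff 0 (aeval ![u, v] p))) := by
      rw [aeval_C]; exact h1
    have h3 := huv h2
    rw [h3, totalDegree_C] at hp
    omega
  obtain ⟨φ, hφ⟩ := exists_equiv K n
  have hφa : ∀ q : MvPolynomial (Fin 2) K, aeval ![φ u, φ v] q = φ (aeval ![u, v] q) := by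
    intro q
    have := congrArg (fun f => f q) (comp_aeval ![u, v] φ.toAlgHom)
    simp only [AlgHom.comp_apply] at this
    have e : (fun i => φ.toAlgHom (![u, v] i)) = ![φ u, φ v] := by
      ext i : 1; fin_cases i <;> rfl
    rw [e] at this
    exact this.symm
  have hUd := hφ u
  have hVd := hφ v
  have hUp : 0 < (φ u).natDegree := by rw [hUd]; exact hu
  have hVp : 0 < (φ v).natDegree := by rw [hVd]; exact hv
  obtain ⟨g, m', n', hg, hco, hm, hn⟩ := Nat.exists_coprime' (Nat.gcd_pos_of_pos_left (φ v).natDegree hUp)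
  rw [mul_comm] at hm hn
  obtain ⟨hor, halg⟩ := core (φ u) (φ v) hUp hVp (fun q => by
      rw [hφa, hφa, hφ, hφ, hφ]
      exact key_deriv (Fin.last n) u v hu p hz hc q) p (by rw [hφa, hφ, hz]) hp g m' n' hm hn hco
  have hUl : (φ u).leadingCoeff ≠ 0 := by
    rw [Ne, Polynomial.leadingCoeff_eq_zero]; intro h; simp [h] at hUp
  have hVl : (φ v).leadingCoeff ≠ 0 := by
    rw [Ne, Polynomial.leadingCoeff_eq_zero]; intro h; simp [h] at hVp
  have halg' := halg (FractionRing (MvPolynomial (Fin n) K))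
  rw [← map_pow, ← map_pow] at halg'
  obtain ⟨s, hs, hsr⟩ := alg_const _ _ (pow_ne_zero _ hUl) (pow_ne_zero _ hVl) halg'
  have hφC : ∀ t : K, φ (C t) = Polynomial.C (C t) := fun t => φ.commutes t
  have hdrop : ∀ (f h : MvPolynomial (Fin (n + 1)) K) (k : ℕ) (t : K), 0 < (φ f).natDegree →
      (φ f).natDegree = (φ h).natDegree * k →
      (φ f).leadingCoeff + C t * (φ h).leadingCoeff ^ k = 0 →
      degreeOf (Fin.last n) (f + C t * h ^ k) < degreeOf (Fin.last n) f := by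
    intro f h k t h1 h2 h3
    have := drop_poly (φ f) (φ h) h1 k h2 (C t) h3
    rwa [← hφC, ← map_pow, ← map_mul, ← map_add, hφ, hφ] at this
  obtain ⟨r1, r2, r3⟩ := hred
  rcases hor with rfl | rfl
  · -- the degree of `u` divides the degree of `v`
    have hd := hdrop v u n' (-s) hVp (by rw [hm, hn]; ring) (by
      rw [pow_one] at hsr; rw [hsr, C_neg]; ring)
    by_cases hk : 2 ≤ n'
    · have := r3 (-s) (neg_ne_zero.2 hs) n' hk
      omega
    · have hn1 : n' = 1 := by
        have : n' ≠ 0 := by rintro rfl; simp at hn; omega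
        omega
      have := r1 1 0 (-s) 1 (by simp)
      rw [hn1, pow_one, add_comm v] at hd
      simp only [C_1, C_0, one_mul, zero_mul, add_zero] at this
      omega
  · have hd := hdrop u v m' (-s⁻¹) hUp (by rw [hm, hn]; ring) (by
      rw [pow_one] at hsr; rw [hsr, ← mul_assoc, ← C_mul, neg_mul, inv_mul_cancel₀ hs, C_neg, C_1]
      ring)
    by_cases hk : 2 ≤ m'
    · have := r2 (-s⁻¹) (neg_ne_zero.2 (inv_ne_zero hs)) m' hk
      omega
    · have hm1 : m' = 1 := by
        have : m' ≠ 0 := by rintro rfl; simp at hm; omega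
        omega
      have := r1 1 (-s⁻¹) 0 1 (by simp)
      rw [hm1, pow_one] at hd
      simp only [C_1, C_0, one_mul, zero_mul, zero_add] at this
      omega
end

section
/- Let K be a field of characteristic 0, n ≥ 1, and let D be a locally nilpotent K-derivation of the polynomial ring K[x₁, …, xₙ] that admits a slice s (i.e., D(s) = 1). Extend D to a K-derivation D′ of K[x₁, …, x_{n+1}] by setting D′(x_{n+1}) = 0 and D′(xᵢ) = D(xᵢ) for i ≤ n. Then the kernel of D′ is isomorphic as a K-algebra to K[x₁, …, xₙ]. -/
open MvPolynomial

theorem aux_pow {K B : Type*} [Field K] [CharZero K] [CommRing B] [Algebra K B]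
    (E : Derivation K B B) (t : B) (ht : E t = 1) (a : B) (ha : E a = 0) (k : ℕ) :
    (E.toLinearMap ^ k) (t ^ k * a) = (k.factorial : K) • a := by
  induction k with
  | zero => simp
  | succ k ih =>
    have h1 : E (t ^ (k + 1) * a) = ((k + 1 : ℕ) : K) • (t ^ k * a) := by
      rw [E.leibniz, ha, E.leibniz_pow, ht, Nat.cast_smul_eq_nsmul]
      simp only [smul_eq_mul, nsmul_eq_mul, Nat.add_sub_cancel]
      ring
    rw [pow_succ, Module.End.mul_apply]
    change (E.toLinearMap ^ k) (E (t ^ (k + 1) * a)) = _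
    rw [h1, map_smul, ih, smul_smul, Nat.factorial_succ]
    push_cast
    rfl

theorem aux_surj {K B : Type*} [Field K] [CharZero K] [CommRing B] [Algebra K B]
    (E : Derivation K B B) (t : B) (ht : E t = 1) (k : ℕ) :
    ∀ b : B, (E.toLinearMap ^ k) b = 0 → ∃ b0 c, E b0 = 0 ∧ b = b0 + t * c := by
  induction k with
  | zero =>
    intro b hb
    exact ⟨0, 0, by simp, by simpa using hb⟩
  | succ k ih =>
    intro b hb
    have ha : E ((E.toLinearMap ^ k) b) = 0 := by
      rw [pow_succ', Module.End.mul_apply] at hb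
      exact hb
    set a := (E.toLinearMap ^ k) b with hadef
    have hf : (k.factorial : K) ≠ 0 := by exact_mod_cast k.factorial_ne_zero
    rcases Nat.eq_zero_or_pos k with rfl | hk
    · exact ⟨b, 0, by simpa [hadef] using ha, by simp⟩
    obtain ⟨b0, c, h0, hbc⟩ := ih (b - (k.factorial : K)⁻¹ • (t ^ k * a)) (by
      rw [map_sub, map_smul, aux_pow E t ht a ha, smul_smul, inv_mul_cancel₀ hf, one_smul,
        ← hadef, sub_self])
    obtain ⟨m, rfl⟩ : ∃ m, k = m + 1 := ⟨k - 1, by omega⟩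
    refine ⟨b0, c + (((m + 1).factorial : K)⁻¹ • (t ^ m * a)), h0, ?_⟩
    rw [sub_eq_iff_eq_add] at hbc
    rw [hbc, mul_add, mul_smul_comm, pow_succ', mul_assoc, add_assoc]

theorem aux_mul {K B : Type*} [Field K] [CharZero K] [CommRing B] [Algebra K B]
    (E : Derivation K B B) (t : B) (ht : E t = 1) (c : B) (k : ℕ) :
    (E.toLinearMap ^ (k + 1)) (t * c) =
      t * (E.toLinearMap ^ (k + 1)) c + ((k + 1 : ℕ) : B) * (E.toLinearMap ^ k) c := by
  induction k with
  | zero => simp [E.leibniz, ht]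
  | succ k ih =>
    have e : ∀ j d, (E.toLinearMap ^ (j + 1)) d = E ((E.toLinearMap ^ j) d) := by
      intro j d
      rw [pow_succ', Module.End.mul_apply]; rfl
    rw [e (k + 1) (t * c), ih, map_add, E.leibniz, E.leibniz, ht, E.map_natCast, e (k + 1) c, e k c]
    simp only [smul_eq_mul]
    push_cast
    ring

theorem aux_inj {K B : Type*} [Field K] [CharZero K] [CommRing B] [Algebra K B]
    (E : Derivation K B B) (t : B) (ht : E t = 1) (c : B) (hb : E (t * c) = 0) (k : ℕ) :
    (E.toLinearMap ^ k) c = 0 → c = 0 := by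
  induction k with
  | zero => intro h; simpa using h
  | succ k ih =>
    intro h
    apply ih
    have h1 := aux_mul E t ht c k
    rw [h, pow_succ, Module.End.mul_apply] at h1
    change (E.toLinearMap ^ k) (E (t * c)) = _ at h1
    rw [hb, map_zero, mul_zero, zero_add, ← nsmul_eq_mul, ← Nat.cast_smul_eq_nsmul K] at h1
    have hf : ((k + 1 : ℕ) : K) ≠ 0 := by exact_mod_cast k.succ_ne_zero
    exact (smul_eq_zero_iff_right hf).1 h1.symm

/-- The kernel of a `K`-derivation of a commutative `K`-algebra `A` with values
in `A`, as a `K`-subalgebra of `A`. -/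
def Derivation.kerSubalgebra {K A : Type*} [CommRing K] [CommRing A] [Algebra K A]
    (D : Derivation K A A) : Subalgebra K A where
  carrier := {a | D a = 0}
  mul_mem' := by
    intro a b (ha : D a = 0) (hb : D b = 0)
    show D (a * b) = 0
    rw [D.leibniz, ha, hb, smul_zero, smul_zero, add_zero]
  add_mem' := by
    intro a b (ha : D a = 0) (hb : D b = 0)
    show D (a + b) = 0
    rw [map_add, ha, hb, add_zero]
  algebraMap_mem' := fun r => D.map_algebraMap r

/-- **Key step in the proof of Theorem 1.2.**  Let `D` be a locally nilpotent
`K`-derivation of `K[x₁, …, xₙ]` with a slice `s`, and extend it to a derivation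
`D′` of `K[x₁, …, x_{n+1}]` with `D′(x_{n+1}) = 0`.  Then the kernel of `D′` is
isomorphic as a `K`-algebra to `K[x₁, …, xₙ]`. -/
theorem kernel_of_extended_derivation_iso
    (K : Type) [Field K] [CharZero K] (n : ℕ) (hn : 1 ≤ n)
    (D : Derivation K (MvPolynomial (Fin n) K) (MvPolynomial (Fin n) K))
    (hloc : ∀ g : MvPolynomial (Fin n) K,
      ∃ k : ℕ, 0 < k ∧ (D.toLinearMap ^ k) g = 0)
    (s : MvPolynomial (Fin n) K) (hs : D s = 1)
    (D' : Derivation K (MvPolynomial (Fin (n + 1)) K) (MvPolynomial (Fin (n + 1)) K))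
    (hD'ext : ∀ i : Fin n, D' (X i.castSucc) = rename Fin.castSucc (D (X i)))
    (hD'last : D' (X (Fin.last n)) = 0) :
    Nonempty (D'.kerSubalgebra ≃ₐ[K] MvPolynomial (Fin n) K) := by
  have hren : ∀ a, D' (rename Fin.castSucc a) = rename Fin.castSucc (D a) := by
    intro a
    induction a using MvPolynomial.induction_on with
    | C c => 
      rw [rename_C, ← MvPolynomial.algebraMap_eq, ← MvPolynomial.algebraMap_eq, D.map_algebraMap,
        D'.map_algebraMap, map_zero]
    | add p q hp hq => simp only [map_add, hp, hq]
    | mul_X p i hp =>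
      simp only [map_mul, Derivation.leibniz, hp, rename_X, hD'ext, smul_eq_mul, map_add]
  have hpow : ∀ (i k : ℕ) a, (D'.toLinearMap ^ k) (X (Fin.last n) ^ i * rename Fin.castSucc a) =
      X (Fin.last n) ^ i * rename Fin.castSucc ((D.toLinearMap ^ k) a) := by
    intro i k
    induction k with
    | zero => intro a; simp
    | succ k ih =>
      intro a
      rw [pow_succ, pow_succ, Module.End.mul_apply, Module.End.mul_apply]
      change (D'.toLinearMap ^ k) (D' _) = _ * rename _ ((D.toLinearMap ^ k) (D a))
      rw [← ih, D'.leibniz, D'.leibniz_pow, hD'last, hren]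
      simp
  have hnil0 : ∀ (b : MvPolynomial (Fin (n + 1)) K) (i : ℕ) (a : MvPolynomial (Fin n) K),
      ∃ k, (D'.toLinearMap ^ k) (X (Fin.last n) ^ i * rename Fin.castSucc a * b) = 0 := by
    intro b
    induction b using MvPolynomial.induction_on with
    | C c =>
      intro i a
      obtain ⟨k, -, hk⟩ := hloc (a * C c)
      refine ⟨k, ?_⟩
      have := hpow i k (a * C c)
      rw [hk, map_zero, mul_zero, map_mul (rename Fin.castSucc), rename_C, ← mul_assoc] at this
      exact this
    | add p q hp hq =>
      intro i a
      obtain ⟨k, hk⟩ := hp i a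
      obtain ⟨l, hl⟩ := hq i a
      refine ⟨k + l, ?_⟩
      rw [mul_add, map_add]
      nth_rw 1 [add_comm k l]
      rw [pow_add, pow_add, Module.End.mul_apply, Module.End.mul_apply, hk, hl]
      simp
    | mul_X p j hp =>
      intro i a
      induction j using Fin.lastCases with
      | last =>
        obtain ⟨k, hk⟩ := hp (i + 1) a
        refine ⟨k, ?_⟩
        rw [← hk]
        congr 1
        ring
      | cast j =>
        obtain ⟨k, hk⟩ := hp i (a * X j)
        refine ⟨k, ?_⟩
        rw [← hk, map_mul (rename Fin.castSucc), rename_X]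
        congr 1
        ring
  have hnil : ∀ b, ∃ k, (D'.toLinearMap ^ k) b = 0 := by
    intro b
    simpa using hnil0 b 0 1
  let t : MvPolynomial (Fin (n + 1)) K := rename Fin.castSucc s - X (Fin.last n)
  have ht : D' t = 1 := by
    simp only [t, map_sub, hren, hs, hD'last, map_one, sub_zero]
  let π : MvPolynomial (Fin (n + 1)) K →ₐ[K] MvPolynomial (Fin n) K :=
    aeval (Fin.lastCases s X)
  have hπr : ∀ a, π (rename Fin.castSucc a) = a := by
    intro a
    have : (π.comp (rename Fin.castSucc)) = AlgHom.id K _ := by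
      ext i : 1
      simp [π]
    exact DFunLike.congr_fun this a
  have hπt : π t = 0 := by
    simp only [t, map_sub, hπr]
    simp [π]
  have hker : ∀ b, π b = 0 → ∃ c, b = t * c := by
    intro b hb
    have : ((Ideal.Quotient.mkₐ K (Ideal.span {t})).comp
        ((rename Fin.castSucc).comp π)) = Ideal.Quotient.mkₐ K (Ideal.span {t}) := by
      ext i : 1
      induction i using Fin.lastCases with
      | last =>
        simp only [AlgHom.comp_apply, π, aeval_X, Fin.lastCases_last, Ideal.Quotient.mkₐ_eq_mk]
        rw [Ideal.Quotient.eq]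
        exact Ideal.mem_span_singleton_self t
      | cast j => simp [π]
    have h := DFunLike.congr_fun this b
    simp only [AlgHom.comp_apply, hb, map_zero, Ideal.Quotient.mkₐ_eq_mk] at h
    exact Ideal.mem_span_singleton.1 (Ideal.Quotient.eq_zero_iff_mem.1 h.symm)
  refine ⟨AlgEquiv.ofBijective (π.comp D'.kerSubalgebra.val) ⟨?_, ?_⟩⟩
  · rw [injective_iff_map_eq_zero]
    rintro ⟨b, hb⟩ h
    change D' b = 0 at hb
    change π b = 0 at h
    obtain ⟨c, rfl⟩ := hker b h
    obtain ⟨k, hk⟩ := hnil c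
    have := aux_inj D' t ht c hb k hk
    subst this
    ext1
    simp
  · intro a
    obtain ⟨k, hk⟩ := hnil (rename Fin.castSucc a)
    obtain ⟨b0, c, h0, hbc⟩ := aux_surj D' t ht k _ hk
    refine ⟨⟨b0, h0⟩, ?_⟩
    change π b0 = a
    rw [← hπr a, hbc, map_add, map_mul, hπt]
    simp
end

section
/- Let K be a field of characteristic 0, n ≥ 1, and let D be a locally nilpotent K-derivation of the polynomial ring K[x₁, …, xₙ] that admits a slice s (i.e., D(s) = 1). Then s, viewed in K[x₁, …, x_{n+1}] via the natural inclusion, is a coordinate of K[x₁, …, x_{n+1}]: there exists a K-algebra automorphism α of K[x₁, …, x_{n+1}] with α(s) = x₁. -/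
open MvPolynomial

section aux

variable {K A : Type} [Field K] [CharZero K] [CommRing A] [IsDomain A] [Algebra K A]

theorem aux_exists_phi (D : Derivation K A A)
    (hloc : ∀ g : A, ∃ k : ℕ, 0 < k ∧ (D.toLinearMap ^ k) g = 0) :
    ∃ φ : A →ₐ[K] Polynomial A,
      ∀ a k, (φ a).coeff k = ((k.factorial : K)⁻¹) • (D.toLinearMap ^ k) a := by
  classical
  choose N hN0 hN using hloc
  have hvan : ∀ a k, N a ≤ k → (D.toLinearMap ^ k) a = 0 := by
    intro a k hk
    obtain ⟨j, rfl⟩ := Nat.exists_eq_add_of_le hk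
    rw [add_comm, pow_add, Module.End.mul_apply, hN, map_zero]
  let f : A → Polynomial A := fun a =>
    ∑ i ∈ Finset.range (N a), Polynomial.monomial i (((i.factorial : K)⁻¹) • (D.toLinearMap ^ i) a)
  have hf : ∀ a k, (f a).coeff k = ((k.factorial : K)⁻¹) • (D.toLinearMap ^ k) a := by
    intro a k
    simp only [f, Polynomial.finsetSum_coeff, Polynomial.coeff_monomial]
    rw [Finset.sum_ite_eq']
    split_ifs with h
    · rfl
    · rw [hvan a k (by simpa using h), smul_zero]
  have hadd : ∀ a b, f (a + b) = f a + f b := by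
    intro a b; ext k; simp [hf]
  have hder : ∀ a, Polynomial.derivative (f a) = f (D a) := by
    intro a; ext k
    rw [Polynomial.coeff_derivative, hf, hf, pow_succ, Module.End.mul_apply]
    have h1 : ((k : A) + 1) = algebraMap K A (k + 1) := by simp
    have h2 : ((k : K) + 1) ≠ 0 := Nat.cast_add_one_ne_zero k
    rw [h1, mul_comm, ← Algebra.smul_def, smul_smul, Nat.factorial_succ]
    push_cast
    rw [mul_inv, ← mul_assoc, mul_inv_cancel₀ h2, one_mul]
  have hmul : ∀ k a b, (f (a * b)).coeff k = (f a * f b).coeff k := by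
    intro k
    induction k with
    | zero => intro a b; simp [hf, Polynomial.mul_coeff_zero]
    | succ k ih =>
      intro a b
      have h2 : ((k : A) + 1) ≠ 0 := by
        have h1 : ((k : A) + 1) = algebraMap K A (k + 1) := by simp
        rw [h1]
        exact (map_ne_zero_iff _ (algebraMap K A).injective).mpr (Nat.cast_add_one_ne_zero k)
      apply mul_right_cancel₀ h2
      rw [← Polynomial.coeff_derivative, ← Polynomial.coeff_derivative, hder,
        Polynomial.derivative_mul, hder, hder, Polynomial.coeff_add, ← ih, ← ih,
        ← Polynomial.coeff_add, ← hadd]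
      congr 2
      simp only [Derivation.leibniz, smul_eq_mul]
      ring
  have hC : ∀ r : K, f (algebraMap K A r) = algebraMap K (Polynomial A) r := by
    intro r; ext k
    rw [hf, Polynomial.algebraMap_apply, Polynomial.coeff_C]
    cases k with
    | zero => simp
    | succ k => 
      rw [pow_succ, Module.End.mul_apply]
      simp
  refine ⟨{ toFun := f, map_one' := ?_, map_mul' := ?_, map_zero' := ?_, map_add' := hadd,
            commutes' := hC }, hf⟩
  · simpa using hC 1
  · intro a b; ext k; exact hmul k a b
  · simpa using hC 0

theorem aux_exists_equiv (D : Derivation K A A)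
    (hloc : ∀ g : A, ∃ k : ℕ, 0 < k ∧ (D.toLinearMap ^ k) g = 0) (s : A) (hs : D s = 1) :
    ∃ Φ : Polynomial A ≃ₐ[K] Polynomial A,
      Φ (Polynomial.C s) = Polynomial.C s + Polynomial.X := by
  obtain ⟨φ, hφ⟩ := aux_exists_phi D hloc
  let Φ : Polynomial A →ₐ[K] Polynomial A :=
    Polynomial.eval₂AlgHom φ Polynomial.X (fun _ => mul_comm _ _)
  have hΦC : ∀ a, Φ (Polynomial.C a) = φ a := fun a => Polynomial.eval₂_C _ _
  have hΦX : Φ Polynomial.X = Polynomial.X := Polynomial.eval₂_X _ _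
  have h0 : ∀ p, (Φ p).coeff 0 = p.coeff 0 := by
    intro p
    have h := Polynomial.divX_mul_X_add p
    conv_lhs => rw [← h]
    simp [hΦC, hΦX, hφ]
  have hinj : Function.Injective Φ := by
    rw [injective_iff_map_eq_zero]
    suffices h : ∀ n (p : Polynomial A), p.natDegree < n → Φ p = 0 → p = 0 from
      fun p hp => h _ p (Nat.lt_succ_self _) hp
    intro n
    induction n with
    | zero => intro p hp; omega
    | succ n ih =>
      intro p hp hz
      have hc : p.coeff 0 = 0 := by rw [← h0, hz]; simp
      have h := Polynomial.divX_mul_X_add p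
      rw [hc, map_zero, add_zero] at h
      by_cases hd : p.natDegree = 0
      · rw [Polynomial.eq_C_of_natDegree_eq_zero hd, hc, map_zero]
      have hq : p.divX = 0 := by
        apply ih
        · rw [Polynomial.natDegree_divX_eq_natDegree_tsub_one]; omega
        · rw [← h, map_mul, hΦX] at hz
          exact (mul_eq_zero.mp hz).resolve_right Polynomial.X_ne_zero
      rw [← h, hq, zero_mul]
  have hCr : ∀ k (a : A), (D.toLinearMap ^ k) a = 0 → Polynomial.C a ∈ Φ.range := by
    intro k
    induction k with
    | zero => 
      intro a ha
      have : a = 0 := by simpa using ha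
      rw [this, map_zero]; exact zero_mem _
    | succ k ih =>
      intro a ha
      have hX : (Polynomial.X : Polynomial A) ∈ Φ.range := ⟨_, hΦX⟩
      have hdiv : (φ a).divX ∈ Φ.range := by
        rw [Polynomial.as_sum_range_C_mul_X_pow (φ a).divX]
        refine sum_mem fun i _ => mul_mem (ih _ ?_) (pow_mem hX _)
        rw [Polynomial.coeff_divX, hφ, map_smul, ← Module.End.mul_apply, ← pow_add,
          show k + (i + 1) = i + (k + 1) by ring, pow_add, Module.End.mul_apply, ha, map_zero,
          smul_zero]
      have h := Polynomial.divX_mul_X_add (φ a)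
      have h1 : (φ a).coeff 0 = a := by simp [hφ]
      rw [h1] at h
      rw [← add_sub_cancel_left ((φ a).divX * Polynomial.X) (Polynomial.C a), h]
      exact sub_mem ⟨_, hΦC a⟩ (mul_mem hdiv hX)
  have hsurj : Function.Surjective Φ := by
    intro p
    change p ∈ Φ.range
    rw [Polynomial.as_sum_range_C_mul_X_pow p]
    have hX : (Polynomial.X : Polynomial A) ∈ Φ.range := ⟨_, hΦX⟩
    refine sum_mem fun i _ => mul_mem ?_ (pow_mem hX _)
    obtain ⟨k, -, hk⟩ := hloc (p.coeff i)
    exact hCr k _ hk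
  refine ⟨AlgEquiv.ofBijective Φ ⟨hinj, hsurj⟩, ?_⟩
  change Φ (Polynomial.C s) = _
  rw [hΦC]
  ext k
  rw [hφ]
  match k with
  | 0 => simp
  | 1 => simp [hs]
  | k + 2 =>
    rw [pow_succ, Module.End.mul_apply, pow_succ, Module.End.mul_apply]
    simp [hs, Polynomial.coeff_C, Polynomial.coeff_X]

end aux

/-- **Key step in the proof of Theorem 1.2.**  Let `D` be a locally nilpotent
`K`-derivation of `K[x₁, …, xₙ]` with a slice `s`.  Then `s`, viewed in
`K[x₁, …, x_{n+1}]` via the natural inclusion, is a coordinate of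
`K[x₁, …, x_{n+1}]`. -/
theorem slice_is_stable_coordinate
    (K : Type) [Field K] [CharZero K] (n : ℕ) (hn : 1 ≤ n)
    (D : Derivation K (MvPolynomial (Fin n) K) (MvPolynomial (Fin n) K))
    (hloc : ∀ g : MvPolynomial (Fin n) K,
      ∃ k : ℕ, 0 < k ∧ (D.toLinearMap ^ k) g = 0)
    (s : MvPolynomial (Fin n) K) (hs : D s = 1) :
    ∃ α : MvPolynomial (Fin (n + 1)) K ≃ₐ[K] MvPolynomial (Fin (n + 1)) K,
      α (rename Fin.castSucc s) = X 0 := by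
  obtain ⟨Φ, hΦ⟩ := aux_exists_equiv D hloc s hs
  let τ : Polynomial (MvPolynomial (Fin n) K) ≃ₐ[K] Polynomial (MvPolynomial (Fin n) K) :=
    (Polynomial.algEquivAevalXAddC (-s)).restrictScalars K
  have hτ : τ (Polynomial.C s + Polynomial.X) = Polynomial.X := by
    simp [τ, Polynomial.algEquivAevalXAddC]
  have he : MvPolynomial.finSuccEquiv K n (rename (finRotate (n + 1)) (rename Fin.castSucc s)) =
      Polynomial.C s := by
    have hc : (finRotate (n + 1)) ∘ Fin.castSucc = (Fin.succ : Fin n → Fin (n + 1)) := by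
      funext i
      simp
    rw [rename_rename, hc]
    have h : ((MvPolynomial.finSuccEquiv K n).toAlgHom.comp (rename Fin.succ)) =
        (Algebra.ofId (MvPolynomial (Fin n) K)
          (Polynomial (MvPolynomial (Fin n) K))).restrictScalars K := by
      apply MvPolynomial.algHom_ext
      intro i
      simpa using finSuccEquiv_X_succ
    exact DFunLike.congr_fun h s
  refine ⟨(((renameEquiv K (finRotate (n + 1))).trans (MvPolynomial.finSuccEquiv K n)).trans
    (Φ.trans τ)).trans (MvPolynomial.finSuccEquiv K n).symm, ?_⟩
  simp only [AlgEquiv.trans_apply, renameEquiv_apply]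
  rw [he, hΦ, hτ, AlgEquiv.symm_apply_eq, finSuccEquiv_X_zero]
end

section
/- The quotient algebras ℂ[x, y, z]/(xy² + z² + 1) and ℂ[x, y, z]/(xy² + z²y − z² + y − 1) are isomorphic as ℂ-algebras. -/
open MvPolynomial

theorem quot_equiv_aux (f g : MvPolynomial (Fin 3) ℂ)
    (φ ψ : MvPolynomial (Fin 3) ℂ →ₐ[ℂ] MvPolynomial (Fin 3) ℂ)
    (h1 : g ∣ φ f) (h2 : f ∣ ψ g)
    (h3 : ∀ i, g ∣ φ (ψ (X i)) - X i) (h4 : ∀ i, f ∣ ψ (φ (X i)) - X i) :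
    Nonempty ((MvPolynomial (Fin 3) ℂ ⧸ Ideal.span {f}) ≃ₐ[ℂ]
      (MvPolynomial (Fin 3) ℂ ⧸ Ideal.span {g})) := by
  have k1 : Ideal.span {f} ≤ (Ideal.span {g}).comap φ := by
    rw [Ideal.span_le, Set.singleton_subset_iff]
    exact Ideal.mem_span_singleton.2 h1
  have k2 : Ideal.span {g} ≤ (Ideal.span {f}).comap ψ := by
    rw [Ideal.span_le, Set.singleton_subset_iff]
    exact Ideal.mem_span_singleton.2 h2
  refine ⟨AlgEquiv.ofAlgHom (Ideal.quotientMapₐ _ φ k1) (Ideal.quotientMapₐ _ ψ k2) ?_ ?_⟩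
  · apply Ideal.Quotient.algHom_ext
    apply MvPolynomial.algHom_ext
    intro i
    exact Ideal.Quotient.eq.2 (Ideal.mem_span_singleton.2 (h3 i))
  · apply Ideal.Quotient.algHom_ext
    apply MvPolynomial.algHom_ext
    intro i
    exact Ideal.Quotient.eq.2 (Ideal.mem_span_singleton.2 (h4 i))

/-- **Isomorphism of the two quotient algebras in the proof of Proposition 1.3.**
`ℂ[x, y, z]/(xy² + z² + 1)` and `ℂ[x, y, z]/(xy² + z²y − z² + y − 1)` are
isomorphic as `ℂ`-algebras. -/
theorem danielewski_quotients_isomorphic :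
    Nonempty
      ((MvPolynomial (Fin 3) ℂ ⧸
          Ideal.span {(X 0 * X 1 ^ 2 + X 2 ^ 2 + 1 : MvPolynomial (Fin 3) ℂ)}) ≃ₐ[ℂ]
        (MvPolynomial (Fin 3) ℂ ⧸
          Ideal.span {(X 0 * X 1 ^ 2 + X 2 ^ 2 * X 1 - X 2 ^ 2 + X 1 - 1 :
            MvPolynomial (Fin 3) ℂ)})) := by
  apply quot_equiv_aux _ _
    (aeval ![-(X 0 * (1 + X 1) + X 2 ^ 2 + 1), X 1, X 2])
    (aeval ![-(X 0 * (1 - X 1)), X 1, X 2])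
  · exact ⟨-(1 + X 1), by simp; ring⟩
  · exact ⟨X 1 - 1, by simp; ring⟩
  · intro i
    fin_cases i
    · exact ⟨-1, by simp; ring⟩
    · simp
    · simp
  · intro i
    fin_cases i
    · exact ⟨-1, by simp; ring⟩
    · simp
    · simp
end

section
/- Let p = x₁x₂² + x₃² + 1 and q = x₁x₂² + x₃²x₂ − x₃² + x₂ − 1. For every m ≥ 3, there is no ℂ-algebra automorphism of ℂ[x₁, …, xₘ] that maps p to q (where p and q are viewed in ℂ[x₁, …, xₘ] via the natural inclusion); that is, p and q are not equivalent and not even stably equivalent. -/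
open MvPolynomial

/-- **Stable inequivalence in the proof of Proposition 1.3.**  For
`p = x₁x₂² + x₃² + 1` and `q = x₁x₂² + x₃²x₂ − x₃² + x₂ − 1` and every `m ≥ 3`,
no `ℂ`-algebra automorphism of `ℂ[x₁, …, xₘ]` maps `p` to `q` (both viewed via
the natural inclusion `ℂ[x₁, x₂, x₃] → ℂ[x₁, …, xₘ]`). -/
theorem p_q_stably_inequivalent (m : ℕ) (hm : 3 ≤ m) :
    ¬ ∃ φ : MvPolynomial (Fin m) ℂ ≃ₐ[ℂ] MvPolynomial (Fin m) ℂ,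
      φ (rename (Fin.castLE hm)
          (X 0 * X 1 ^ 2 + X 2 ^ 2 + 1 : MvPolynomial (Fin 3) ℂ)) =
        rename (Fin.castLE hm)
          (X 0 * X 1 ^ 2 + X 2 ^ 2 * X 1 - X 2 ^ 2 + X 1 - 1 : MvPolynomial (Fin 3) ℂ) := by
  rintro ⟨φ, h⟩
  set i0 : Fin m := Fin.castLE hm 0 with hi0
  set i1 : Fin m := Fin.castLE hm 1 with hi1
  set i2 : Fin m := Fin.castLE hm 2 with hi2
  have h01 : i0 ≠ i1 := by simp [hi0, hi1, Fin.ext_iff]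
  have h02 : i0 ≠ i2 := by simp [hi0, hi2, Fin.ext_iff]
  have h12 : i1 ≠ i2 := by simp [hi1, hi2, Fin.ext_iff]
  simp only [map_add, map_sub, map_mul, map_pow, rename_X, map_one, ← hi0, ← hi1, ← hi2] at h
  have h0 := congrArg (pderiv i0) h
  have h1 := congrArg (pderiv i1) h
  have h2 := congrArg (pderiv i2) h
  simp only [map_add, map_sub, Derivation.leibniz, Derivation.leibniz_pow, pderiv_X_self,
    pderiv_X_of_ne h01, pderiv_X_of_ne h02, pderiv_X_of_ne h12, pderiv_X_of_ne h01.symm,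
    pderiv_X_of_ne h02.symm, pderiv_X_of_ne h12.symm, Derivation.map_one_eq_zero,
    smul_eq_mul, nsmul_eq_mul] at h0 h1 h2
  norm_num at h0 h1 h2
  have key : ∃ A B : MvPolynomial (Fin m) ℂ, 2 = A * φ (X i1) + B * φ (X i2) := by
    have m1 : φ (X i1) ∈ Ideal.span {φ (X i1), φ (X i2)} := Ideal.subset_span (by simp)
    have m2 : φ (X i2) ∈ Ideal.span {φ (X i1), φ (X i2)} := Ideal.subset_span (by simp)
    have L : ∀ a b c : MvPolynomial (Fin m) ℂ,
        a * φ (X i1) + b * φ (X i2) = c → c ∈ Ideal.span {φ (X i1), φ (X i2)} := by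
      rintro a b c rfl
      exact Ideal.add_mem _ (Ideal.mul_mem_left _ _ m1) (Ideal.mul_mem_left _ _ m2)
    have e0 : (X i1 ^ 2 : MvPolynomial (Fin m) ℂ) ∈ Ideal.span {φ (X i1), φ (X i2)} :=
      L (φ (X i1) * pderiv i0 (φ (X i0)) + 2 * φ (X i0) * pderiv i0 (φ (X i1)))
        (2 * pderiv i0 (φ (X i2))) _ (by linear_combination h0)
    have e1 : (2 * X i0 * X i1 + X i2 ^ 2 + 1 : MvPolynomial (Fin m) ℂ) ∈
        Ideal.span {φ (X i1), φ (X i2)} :=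
      L (φ (X i1) * pderiv i1 (φ (X i0)) + 2 * φ (X i0) * pderiv i1 (φ (X i1)))
        (2 * pderiv i1 (φ (X i2))) _ (by linear_combination h1)
    have e2 : (2 * X i2 * (X i1 - 1) : MvPolynomial (Fin m) ℂ) ∈
        Ideal.span {φ (X i1), φ (X i2)} :=
      L (φ (X i1) * pderiv i2 (φ (X i0)) + 2 * φ (X i0) * pderiv i2 (φ (X i1)))
        (2 * pderiv i2 (φ (X i2))) _ (by linear_combination h2)
    have e : (2 : MvPolynomial (Fin m) ℂ) ∈ Ideal.span {φ (X i1), φ (X i2)} := by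
      have := Ideal.add_mem _ (Ideal.add_mem _
        (Ideal.mul_mem_left _ (8 * X i0 ^ 2 - 2 * X i2 ^ 2 * (1 - 2 * X i0 * X i1)) e0)
        (Ideal.mul_mem_left _ (2 * (1 - 2 * X i0 * X i1)) e1))
        (Ideal.mul_mem_left _ (X i2 * (1 + X i1) * (1 - 2 * X i0 * X i1)) e2)
      convert this using 1
      ring
    obtain ⟨A, B, hAB⟩ := Ideal.mem_span_pair.1 e
    exact ⟨A, B, hAB.symm⟩
  obtain ⟨A, B, hAB⟩ := key
  have h3 := congrArg (fun t => eval (fun _ => (0 : ℂ)) (φ.symm t)) hAB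
  simp [show φ.symm 2 = 2 from map_ofNat _ 2] at h3
  rw [map_ofNat] at h3
  exact two_ne_zero h3
end

section
/- For every k ≥ 3, the polynomials p = x₁x₂² + x₃² + 1 and q = x₁x₂² + x₃²x₂ − x₃² + x₂ − 1, viewed in ℂ[x₁, …, x_k] via the natural inclusion, satisfy: the quotient ℂ-algebras ℂ[x₁, …, x_k]/(p) and ℂ[x₁, …, x_k]/(q) are isomorphic, but there is no ℂ-algebra automorphism of ℂ[x₁, …, x_k] mapping p to q. In other words, the hypersurface D(2) × ℂ^{k−3} = {x₁x₂² + x₃² + 1 = 0} has at least two inequivalent embeddings in ℂ^k. -/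
open MvPolynomial

theorem iso_aux {σ : Type} [DecidableEq σ] (i j l : σ) (hj : j ≠ i) (hl : l ≠ i) :
    Nonempty
      ((MvPolynomial σ ℂ ⧸ Ideal.span {(X i * X j ^ 2 + X l ^ 2 + 1 : MvPolynomial σ ℂ)}) ≃ₐ[ℂ]
        (MvPolynomial σ ℂ ⧸ Ideal.span
          {(X i * X j ^ 2 + X l ^ 2 * X j - X l ^ 2 + X j - 1 : MvPolynomial σ ℂ)})) := by
  set p : MvPolynomial σ ℂ := X i * X j ^ 2 + X l ^ 2 + 1 with hp
  set q : MvPolynomial σ ℂ := X i * X j ^ 2 + X l ^ 2 * X j - X l ^ 2 + X j - 1 with hq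
  let A : MvPolynomial σ ℂ →ₐ[ℂ] MvPolynomial σ ℂ :=
    aeval (Function.update X i (-(1 + X j) * X i - (X l ^ 2 + 1)))
  let B : MvPolynomial σ ℂ →ₐ[ℂ] MvPolynomial σ ℂ :=
    aeval (Function.update X i ((X j - 1) * X i))
  have Ai : A (X i) = -(1 + X j) * X i - (X l ^ 2 + 1) := by simp [A]
  have Bi : B (X i) = (X j - 1) * X i := by simp [B]
  have An : ∀ m, m ≠ i → A (X m) = X m := fun m hm => by simp [A, hm]
  have Bn : ∀ m, m ≠ i → B (X m) = X m := fun m hm => by simp [B, hm]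
  have Ap : A p = -(1 + X j) * q := by
    simp only [hp, hq, map_add, map_mul, map_pow, map_one, Ai, An j hj, An l hl]; ring
  have Bq : B q = (X j - 1) * p := by
    simp only [hp, hq, map_add, map_sub, map_mul, map_pow, map_one, Bi, Bn j hj, Bn l hl]; ring
  let fA : (MvPolynomial σ ℂ ⧸ Ideal.span {p}) →ₐ[ℂ] (MvPolynomial σ ℂ ⧸ Ideal.span {q}) :=
    Ideal.quotientMapₐ _ A (by
      rw [Ideal.span_singleton_le_iff_mem, Ideal.mem_comap, Ap]
      exact Ideal.mul_mem_left _ _ (Ideal.mem_span_singleton_self q))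
  let fB : (MvPolynomial σ ℂ ⧸ Ideal.span {q}) →ₐ[ℂ] (MvPolynomial σ ℂ ⧸ Ideal.span {p}) :=
    Ideal.quotientMapₐ _ B (by
      rw [Ideal.span_singleton_le_iff_mem, Ideal.mem_comap, Bq]
      exact Ideal.mul_mem_left _ _ (Ideal.mem_span_singleton_self p))
  refine ⟨AlgEquiv.ofAlgHom fA fB ?_ ?_⟩
  · apply Ideal.Quotient.algHom_ext
    apply MvPolynomial.algHom_ext
    intro m
    change Ideal.Quotient.mk _ (A (B (X m))) = Ideal.Quotient.mk _ (X m)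
    by_cases hm : m = i
    · subst hm
      rw [Ideal.Quotient.eq, Ideal.mem_span_singleton]
      refine ⟨-1, ?_⟩
      simp only [Bi, map_mul, map_sub, map_one, Ai, An j hj, hq]; ring
    · rw [Bn m hm, An m hm]
  · apply Ideal.Quotient.algHom_ext
    apply MvPolynomial.algHom_ext
    intro m
    change Ideal.Quotient.mk _ (B (A (X m))) = Ideal.Quotient.mk _ (X m)
    by_cases hm : m = i
    · subst hm
      rw [Ideal.Quotient.eq, Ideal.mem_span_singleton]
      refine ⟨-1, ?_⟩
      simp only [Ai, map_mul, map_sub, map_add, map_neg, map_pow, map_one, Bi, Bn j hj, Bn l hl, hp]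
      ring
    · rw [An m hm, Bn m hm]

theorem noneq_aux {σ : Type} [DecidableEq σ] (i j l : σ) (hj : j ≠ i) (hl : l ≠ i) (hjl : j ≠ l) :
    ¬ ∃ φ : MvPolynomial σ ℂ ≃ₐ[ℂ] MvPolynomial σ ℂ,
      φ (X i * X j ^ 2 + X l ^ 2 + 1) =
        X i * X j ^ 2 + X l ^ 2 * X j - X l ^ 2 + X j - 1 := by
  rintro ⟨φ, h⟩
  let e : MvPolynomial σ ℂ →ₐ[ℂ] ℂ :=
    (aeval (fun _ => (0 : ℂ))).comp (φ.symm : MvPolynomial σ ℂ →ₐ[ℂ] MvPolynomial σ ℂ)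
  have he : ∀ m, e (φ (X m)) = 0 := fun m => by simp [e]
  have key : ∀ m, e (pderiv m (X i * X j ^ 2 + X l ^ 2 * X j - X l ^ 2 + X j - 1)) = 0 := by
    intro m
    rw [← h]
    simp [he, Derivation.leibniz, Derivation.leibniz_pow]
  have h1 := key i
  have h2 := key j
  have h3 := key l
  simp [Derivation.leibniz, Derivation.leibniz_pow, pderiv_X, hj, hl, hjl,
    hj.symm, hl.symm, hjl.symm] at h1 h2 h3
  simp [h1] at h2 h3
  rw [map_ofNat] at h3
  rcases h3 with h3 | h3
  · norm_num at h3
  · simp [h3] at h2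

/-- **Proposition 1.3.**  For every `k ≥ 3`, the polynomials
`p = x₁x₂² + x₃² + 1` and `q = x₁x₂² + x₃²x₂ − x₃² + x₂ − 1`, viewed in
`ℂ[x₁, …, x_k]`, define isomorphic quotient algebras while no automorphism of
`ℂ[x₁, …, x_k]` maps `p` to `q`; i.e., the hypersurface
`D(2) × ℂ^{k−3} = {x₁x₂² + x₃² + 1 = 0}` has at least two inequivalent
embeddings in `ℂ^k`. -/
theorem danielewski_two_inequivalent_embeddings (k : ℕ) (hk : 3 ≤ k) :
    Nonempty
      ((MvPolynomial (Fin k) ℂ ⧸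
          Ideal.span {rename (Fin.castLE hk)
            (X 0 * X 1 ^ 2 + X 2 ^ 2 + 1 : MvPolynomial (Fin 3) ℂ)}) ≃ₐ[ℂ]
        (MvPolynomial (Fin k) ℂ ⧸
          Ideal.span {rename (Fin.castLE hk)
            (X 0 * X 1 ^ 2 + X 2 ^ 2 * X 1 - X 2 ^ 2 + X 1 - 1 :
              MvPolynomial (Fin 3) ℂ)})) ∧
    ¬ ∃ φ : MvPolynomial (Fin k) ℂ ≃ₐ[ℂ] MvPolynomial (Fin k) ℂ,
      φ (rename (Fin.castLE hk)
          (X 0 * X 1 ^ 2 + X 2 ^ 2 + 1 : MvPolynomial (Fin 3) ℂ)) =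
        rename (Fin.castLE hk)
          (X 0 * X 1 ^ 2 + X 2 ^ 2 * X 1 - X 2 ^ 2 + X 1 - 1 : MvPolynomial (Fin 3) ℂ) := by
  have h01 : Fin.castLE hk 1 ≠ Fin.castLE hk 0 := by simp [Fin.ext_iff]
  have h02 : Fin.castLE hk 2 ≠ Fin.castLE hk 0 := by simp [Fin.ext_iff]
  have h12 : Fin.castLE hk 1 ≠ Fin.castLE hk 2 := by simp [Fin.ext_iff]
  have hp : rename (Fin.castLE hk) (X 0 * X 1 ^ 2 + X 2 ^ 2 + 1 : MvPolynomial (Fin 3) ℂ) =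
      X (Fin.castLE hk 0) * X (Fin.castLE hk 1) ^ 2 + X (Fin.castLE hk 2) ^ 2 + 1 := by
    simp only [map_add, map_mul, map_pow, map_one, rename_X]
  have hq : rename (Fin.castLE hk) (X 0 * X 1 ^ 2 + X 2 ^ 2 * X 1 - X 2 ^ 2 + X 1 - 1 :
      MvPolynomial (Fin 3) ℂ) =
      X (Fin.castLE hk 0) * X (Fin.castLE hk 1) ^ 2 + X (Fin.castLE hk 2) ^ 2 * X (Fin.castLE hk 1)
        - X (Fin.castLE hk 2) ^ 2 + X (Fin.castLE hk 1) - 1 := by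
    simp only [map_add, map_sub, map_mul, map_pow, map_one, rename_X]
  rw [hp, hq]
  exact ⟨iso_aux _ _ _ h01 h02, noneq_aux _ _ _ h01 h02 h12⟩
end
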